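/- arXiv:1810.00920 — 2 statements merged into one kernel-verified Lean document; each statement's English description precedes it below -/
import Mathlib

section
/- Let n > 2k and k ≥ 4. Every intersecting family F ⊆ C([n],k) with γ(F) ≥ 2 satisfies |F| ≤ C(n-1,k-1) - C(n-k-1,k-1) - C(n-k-2,k-2) + 2. Moreover, for k ≥ 5 equality is attained only by families isomorphic to J_2. -/
open Finset

/-- The degree of an element `i` in a family `F`. -/
def deg (F : Finset (Finset ℕ)) (i : ℕ) : ℕ := (F.filter (fun S => i ∈ S)).card

/-- The maximal degree `Δ(F)` of a family `F ⊆ 2^[n]`. -/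
def maxDeg (n : ℕ) (F : Finset (Finset ℕ)) : ℕ := (Finset.Icc 1 n).sup (deg F)

/-- The diversity `γ(F) = |F| - Δ(F)`. -/
def diversity (n : ℕ) (F : Finset (Finset ℕ)) : ℕ := F.card - maxDeg n F

/-- The family `J_i = {I_1, I_i} ∪ {F ∈ C([n],k) : 1 ∈ F, F ∩ I_1 ≠ ∅, F ∩ I_i ≠ ∅}`,
where `I_1 = [2,k+1]` and `I_i = [i+1,k+i]`. -/
def Jfam (n k i : ℕ) : Finset (Finset ℕ) :=
  {Finset.Icc 2 (k + 1), Finset.Icc (i + 1) (k + i)} ∪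
    ((Finset.Icc 1 n).powersetCard k).filter
      (fun F => 1 ∈ F ∧ (F ∩ Finset.Icc 2 (k + 1)).Nonempty ∧
        (F ∩ Finset.Icc (i + 1) (k + i)).Nonempty)

/-- Two families over the ground set `[n]` are isomorphic if one is obtained from the other
by a permutation of the ground set. -/
def isoFam (n : ℕ) (F G : Finset (Finset ℕ)) : Prop :=
  ∃ σ : Equiv.Perm ℕ, (∀ x, x ∈ Finset.Icc 1 n ↔ σ x ∈ Finset.Icc 1 n) ∧
    G = F.image (fun S => S.image σ)

/-- `F` is shifted with respect to elements `≥ t`. -/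
def Shf (t : ℕ) (F : Finset (Finset ℕ)) : Prop :=
  ∀ A ∈ F, ∀ i j, t ≤ i → i < j → j ∈ A → i ∉ A → insert i (A.erase j) ∈ F

def Crs (U V : Finset (Finset ℕ)) : Prop := ∀ A ∈ U, ∀ B ∈ V, (A ∩ B).Nonempty

def tr (s : ℕ) (U : Finset (Finset ℕ)) (i : ℕ) : Finset (Finset ℕ) :=
  (U.image (fun A => A ∩ Icc 1 s)).filter (fun S => S.card = i)

def Mt (X : Finset ℕ) (i : ℕ) (G H : Finset ℕ) : Finset (Finset ℕ) :=
  (powersetCard i X).filter (fun S => (S ∩ G).Nonempty ∧ (S ∩ H).Nonempty)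

def St (c : ℕ) (X : Finset ℕ) (i : ℕ) (G H : Finset ℕ) : Finset (Finset ℕ) :=
  (powersetCard i X).filter (fun S => c ∈ S ∧ (S ∩ G).Nonempty ∧ (S ∩ H).Nonempty)

lemma mem_tr {s U i S} : S ∈ tr s U i ↔ (∃ A ∈ U, A ∩ Icc 1 s = S) ∧ S.card = i := by
  simp [tr]

lemma tr_sub (s U i) : tr s U i ⊆ powersetCard i (Icc 1 s) := by
  intro S hS
  obtain ⟨⟨A, hA, rfl⟩, h⟩ := mem_tr.1 hS
  exact mem_powersetCard.2 ⟨inter_subset_right, h⟩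

lemma Mt_card (X : Finset ℕ) (i : ℕ) (G H : Finset ℕ) (hG : G ⊆ X) (hH : H ⊆ X) :
    (Mt X i G H).card + ((X.card - G.card).choose i + (X.card - H.card).choose i)
      = X.card.choose i + (X.card - (G ∪ H).card).choose i := by
  have e1 : (powersetCard i (X \ G)).card = (X.card - G.card).choose i := by
    rw [card_powersetCard, card_sdiff_of_subset hG]
  have e2 : (powersetCard i (X \ H)).card = (X.card - H.card).choose i := by
    rw [card_powersetCard, card_sdiff_of_subset hH]
  have e3 : (powersetCard i (X \ G) ∩ powersetCard i (X \ H)).card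
      = (X.card - (G ∪ H).card).choose i := by
    rw [← card_sdiff_of_subset (union_subset hG hH), ← card_powersetCard]
    congr 1
    ext S
    simp only [mem_inter, mem_powersetCard, subset_iff, mem_sdiff, mem_union]
    grind
  have e4 := card_union_add_card_inter (powersetCard i (X \ G)) (powersetCard i (X \ H))
  have e5 : (Mt X i G H).card + (powersetCard i (X \ G) ∪ powersetCard i (X \ H)).card
      = X.card.choose i := by
    rw [← card_powersetCard, ← card_union_of_disjoint]
    · congr 1
      ext S
      simp only [Mt, mem_union, mem_filter, mem_powersetCard, subset_iff, mem_sdiff,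
        Finset.Nonempty, mem_inter]
      constructor
      · grind
      · rintro ⟨h1, h2⟩
        by_cases hg : ∃ x, x ∈ S ∧ x ∈ G
        · by_cases hh : ∃ x, x ∈ S ∧ x ∈ H
          · grind
          · grind
        · grind
    · rw [disjoint_left]
      intro S
      simp only [Mt, mem_union, mem_filter, mem_powersetCard, subset_iff, mem_sdiff,
        Finset.Nonempty, mem_inter]
      grind
  omega

lemma St_card_eq (c : ℕ) (X : Finset ℕ) (i : ℕ) (G H : Finset ℕ) (hc : c ∈ X) (hG : c ∉ G)
    (hH : c ∉ H) : (St c X (i + 1) G H).card = (Mt (X.erase c) i G H).card := by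
  refine card_bij' (fun S _ => S.erase c) (fun S _ => insert c S) ?_ ?_ ?_ ?_
  · intro S hS
    simp only [St, Mt, mem_filter, mem_powersetCard, subset_iff, Finset.Nonempty, mem_inter,
      mem_erase] at hS ⊢
    refine ⟨⟨by grind, ?_⟩, by grind, by grind⟩
    rw [card_erase_of_mem hS.2.1]; omega
  · intro S hS
    simp only [St, Mt, mem_filter, mem_powersetCard, subset_iff, Finset.Nonempty, mem_inter,
      mem_erase, mem_insert] at hS ⊢
    refine ⟨⟨by grind, ?_⟩, by grind, by grind⟩
    rw [card_insert_of_notMem (by grind)]; omega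
  · intro S hS
    simp only [St, mem_filter] at hS
    exact insert_erase hS.2.1
  · intro S hS
    simp only [Mt, mem_filter, mem_powersetCard] at hS
    exact erase_insert (by grind)

lemma St_card (c : ℕ) (X : Finset ℕ) (i : ℕ) (G H : Finset ℕ) (hc : c ∈ X) (hG : c ∉ G)
    (hH : c ∉ H) (hGX : G ⊆ X) (hHX : H ⊆ X) :
    (St c X (i + 1) G H).card + ((X.card - 1 - G.card).choose i + (X.card - 1 - H.card).choose i)
      = (X.card - 1).choose i + (X.card - 1 - (G ∪ H).card).choose i := by
  have := Mt_card (X.erase c) i G H (by grind) (by grind)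
  rw [card_erase_of_mem hc] at this
  rw [St_card_eq c X i G H hc hG hH]; exact this

/-! fibres -/
lemma fib_card (m s a : ℕ) (hs : s ≤ m) (S : Finset ℕ) (hS : S ⊆ Icc 1 s) (ha : S.card ≤ a) :
    ((powersetCard a (Icc 1 m)).filter (fun A => A ∩ Icc 1 s = S)).card
      = (m - s).choose (a - S.card) := by
  have : (m - s) = (Icc (s+1) m).card := by simp
  rw [this, ← card_powersetCard]
  have key : ∀ x, x ∈ S → 1 ≤ x ∧ x ≤ s := fun x hx => by simpa using hS hx
  refine card_bij' (fun A _ => A \ S) (fun R _ => S ∪ R) ?_ ?_ ?_ ?_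
  · intro A hA
    simp only [mem_filter, mem_powersetCard] at hA ⊢
    obtain ⟨⟨h1, h2⟩, h3⟩ := hA
    have hSA : S ⊆ A := by rw [← h3]; exact inter_subset_left
    refine ⟨?_, by rw [card_sdiff_of_subset hSA, h2]⟩
    intro x hx
    have := h1 (mem_sdiff.1 hx).1
    rw [← h3] at hx
    simp only [mem_sdiff, mem_inter, mem_Icc] at hx this ⊢
    grind
  · intro R hR
    simp only [mem_filter, mem_powersetCard] at hR ⊢
    obtain ⟨h1, h2⟩ := hR
    have h4 : ∀ x ∈ R, s + 1 ≤ x ∧ x ≤ m := fun x hx => by simpa using h1 hx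
    refine ⟨⟨?_, ?_⟩, ?_⟩
    · intro x hx
      rw [mem_Icc]
      rcases mem_union.1 hx with h | h
      · have := key x h; omega
      · have := h4 x h; omega
    · rw [card_union_of_disjoint, h2]
      · omega
      · rw [disjoint_left]
        intro x hx hx'
        have := key x hx; have := h4 x hx'; omega
    · ext x
      simp only [mem_inter, mem_union, mem_Icc]
      constructor
      · rintro ⟨h | h, h'⟩
        · exact h
        · have := h4 x h; omega
      · intro h; exact ⟨Or.inl h, key x h⟩
  · intro A hA
    simp only [mem_filter, mem_powersetCard] at hA
    have hSA : S ⊆ A := by rw [← hA.2]; exact inter_subset_left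
    exact union_sdiff_of_subset hSA
  · intro R hR
    simp only [mem_powersetCard] at hR
    rw [union_sdiff_left, Finset.sdiff_eq_self_iff_disjoint, disjoint_left]
    intro x hx hx'
    have := key x hx'
    have := hR.1 hx
    simp at this; omega

lemma sum_tr (m s a : ℕ) (U : Finset (Finset ℕ)) (hU : U ⊆ powersetCard a (Icc 1 m))
    (w : ℕ → ℕ) : ∑ S ∈ U.image (fun A => A ∩ Icc 1 s), w S.card
      = ∑ i ∈ range (a + 1), (tr s U i).card * w i := by
  rw [← sum_fiberwise_of_maps_to (t := range (a+1)) (g := fun S : Finset ℕ => S.card)]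
  · apply sum_congr rfl
    intro i _
    rw [sum_congr rfl (g := fun _ => w i)]
    · rw [sum_const, smul_eq_mul]; rfl
    · intro S hS
      rw [(mem_filter.1 hS).2]
  · intro S hS
    obtain ⟨A, hA, rfl⟩ := mem_image.1 hS
    have := (mem_powersetCard.1 (hU hA)).2
    have := card_le_card (inter_subset_left : A ∩ Icc 1 s ⊆ A)
    rw [mem_range]; omega

lemma count_le (m s a : ℕ) (hs : s ≤ m) (U : Finset (Finset ℕ))
    (hU : U ⊆ powersetCard a (Icc 1 m)) :
    U.card ≤ ∑ i ∈ range (a + 1), (tr s U i).card * (m - s).choose (a - i) := by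
  rw [← sum_tr m s a U hU (fun i => (m - s).choose (a - i)),
    card_eq_sum_card_image (fun A => A ∩ Icc 1 s)]
  apply sum_le_sum
  intro S hS
  obtain ⟨A, hA, rfl⟩ := mem_image.1 hS
  rw [← fib_card m s a hs _ inter_subset_right]
  · apply card_le_card
    exact filter_subset_filter _ hU
  · rw [← (mem_powersetCard.1 (hU hA)).2]
    exact card_le_card inter_subset_left

lemma count_eq (m s a : ℕ) (hs : s ≤ m) (Q : Finset ℕ → Prop) [DecidablePred Q] :
    ∑ i ∈ range (a + 1), ((powersetCard i (Icc 1 s)).filter Q).card * (m - s).choose (a - i)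
     ≤ ((powersetCard a (Icc 1 m)).filter (fun A => Q (A ∩ Icc 1 s))).card := by
  have h : ((powersetCard a (Icc 1 m)).filter (fun A => Q (A ∩ Icc 1 s))).card =
      ∑ S ∈ (range (a+1)).biUnion (fun i => (powersetCard i (Icc 1 s)).filter Q),
      (((powersetCard a (Icc 1 m)).filter (fun A => Q (A ∩ Icc 1 s))).filter
        (fun A => A ∩ Icc 1 s = S)).card := by
    apply card_eq_sum_card_fiberwise
    intro A hA
    simp only [coe_filter, mem_powersetCard, Set.mem_ofPred_eq] at hA
    have := card_le_card (inter_subset_left : A ∩ Icc 1 s ⊆ A)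
    simp only [coe_biUnion, coe_filter, Set.mem_iUnion, mem_powersetCard, Set.mem_ofPred_eq, coe_range, Set.mem_Iio]
    exact ⟨_, by omega, ⟨inter_subset_right, rfl⟩, hA.2⟩
  rw [h, sum_biUnion]
  · apply sum_le_sum
    intro i hi
    rw [← smul_eq_mul, ← sum_const]
    apply sum_le_sum
    intro S hS
    simp only [mem_filter, mem_powersetCard, mem_range] at hS hi
    rw [← hS.1.2, ← fib_card m s a hs S hS.1.1 (by omega)]
    apply card_le_card
    intro A hA
    simp only [mem_filter] at hA ⊢
    refine ⟨⟨hA.1, ?_⟩, hA.2⟩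
    rw [hA.2]; exact hS.2
  · intro i _ j _ hij
    simp only [Function.onFun]
    rw [disjoint_left]
    intro S h1 h2
    simp only [mem_filter, mem_powersetCard] at h1 h2
    omega

lemma cmp_le (a e : ℕ) (f g w : ℕ → ℕ) (hw : w a = 1) (h : ∀ i < a, f i ≤ g i)
    (ha : f a ≤ g a + e) :
    ∑ i ∈ range (a + 1), f i * w i ≤ ∑ i ∈ range (a + 1), g i * w i + e := by
  rw [sum_range_succ, sum_range_succ, hw]
  have : ∑ i ∈ range a, f i * w i ≤ ∑ i ∈ range a, g i * w i :=
    sum_le_sum fun i hi => Nat.mul_le_mul_right _ (h i (mem_range.1 hi))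
  omega

lemma cmp_lt (a e : ℕ) (f g w : ℕ → ℕ) (hw : w (a+1) = 1) (hw' : 0 < w a)
    (h : ∀ i < a + 1, f i ≤ g i) (ha : f (a+1) ≤ g (a+1) + e) (hs : f a < g a) :
    ∑ i ∈ range (a + 2), f i * w i < ∑ i ∈ range (a + 2), g i * w i + e := by
  rw [sum_range_succ, sum_range_succ, sum_range_succ, sum_range_succ, hw]
  have : ∑ i ∈ range a, f i * w i ≤ ∑ i ∈ range a, g i * w i :=
    sum_le_sum fun i hi => Nat.mul_le_mul_right _ (h i (by have := mem_range.1 hi; omega))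
  have := Nat.mul_lt_mul_of_pos_right hs hw'
  omega

lemma window (m s a b : ℕ) (U V : Finset (Finset ℕ)) (hU : U ⊆ powersetCard a (Icc 1 m))
    (hV : V ⊆ powersetCard b (Icc 1 m)) (sU : Shf 1 U) (hc : Crs U V) (hs : a + b ≤ s) :
    ∀ A ∈ U, ∀ B ∈ V, (A ∩ B ∩ Icc 1 s).Nonempty := by
  suffices h : ∀ N, ∀ A ∈ U, ∀ B ∈ V, (A ∩ B).card = N → (A ∩ B ∩ Icc 1 s).Nonempty from
    fun A hA B hB => h _ A hA B hB rfl
  intro N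
  induction N using Nat.strong_induction_on with
  | _ N ih =>
  intro A hA B hB hN
  by_contra hne
  rw [not_nonempty_iff_eq_empty] at hne
  obtain ⟨j, hj⟩ := hc A hA B hB
  have hA' := mem_powersetCard.1 (hU hA)
  have hB' := mem_powersetCard.1 (hV hB)
  have hj1 := hA'.1 (mem_inter.1 hj).1
  have hjs : s < j := by
    by_contra hcon
    have : j ∈ A ∩ B ∩ Icc 1 s := mem_inter.2 ⟨hj, by simp at hj1 ⊢; omega⟩
    rw [hne] at this; simp at this
  have hex : ∃ i ∈ Icc 1 s, i ∉ A ∪ B := by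
    by_contra hcon
    push Not at hcon
    have h1 : insert j (Icc 1 s) ⊆ A ∪ B := by
      intro x hx
      rcases mem_insert.1 hx with rfl | hx
      · exact mem_union_left _ (mem_inter.1 hj).1
      · exact hcon x hx
    have h2 := card_le_card h1
    rw [card_insert_of_notMem (by simp; omega)] at h2
    have h3 := card_union_le A B
    simp at h2
    omega
  obtain ⟨i, hi, hiAB⟩ := hex
  simp only [mem_union, not_or, mem_Icc] at hiAB hi
  have hA2 := sU A hA i j hi.1 (by omega) (mem_inter.1 hj).1 hiAB.1
  have hsub : insert i (A.erase j) ∩ B = (A ∩ B).erase j := by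
    ext x; simp only [mem_inter, mem_insert, mem_erase]; grind
  have hlt : (insert i (A.erase j) ∩ B).card < N := by
    rw [hsub, ← hN]; exact card_erase_lt_of_mem hj
  obtain ⟨x, hx⟩ := ih _ hlt _ hA2 B hB rfl
  have : x ∈ A ∩ B ∩ Icc 1 s := by
    rw [hsub] at hx
    simp only [mem_inter, mem_erase] at hx ⊢
    grind
  rw [hne] at this; simp at this

lemma tr_shf (s i : ℕ) (U : Finset (Finset ℕ)) (sU : Shf 1 U) : Shf 1 (tr s U i) := by
  intro S hS p q hp hpq hq hpS
  obtain ⟨⟨A, hA, rfl⟩, hc⟩ := mem_tr.1 hS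
  have hq' := mem_inter.1 hq
  have hqs := mem_Icc.1 hq'.2
  have hpA : p ∉ A := fun h => hpS (mem_inter.2 ⟨h, by simp; omega⟩)
  refine mem_tr.2 ⟨⟨_, sU A hA p q hp hpq hq'.1 hpA, ?_⟩, ?_⟩
  · ext x; simp only [mem_inter, mem_insert, mem_erase, mem_Icc]; grind
  · rw [card_insert_of_notMem (fun h => hpS (mem_of_mem_erase h)), card_erase_of_mem hq]
    have := card_pos.2 ⟨q, hq⟩
    omega

lemma tr_crs (m s a b i j : ℕ) (U V : Finset (Finset ℕ)) (hU : U ⊆ powersetCard a (Icc 1 m))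
    (hV : V ⊆ powersetCard b (Icc 1 m)) (sU : Shf 1 U) (hc : Crs U V) (hs : a + b ≤ s) :
    Crs (tr s U i) (tr s V j) := by
  intro S hS R hR
  obtain ⟨⟨A, hA, rfl⟩, -⟩ := mem_tr.1 hS
  obtain ⟨⟨B, hB, rfl⟩, -⟩ := mem_tr.1 hR
  obtain ⟨x, hx⟩ := window m s a b U V hU hV sU hc hs A hA B hB
  exact ⟨x, by simp only [mem_inter] at hx ⊢; grind⟩

/-- complementary pairs -/
lemma compl_pair_le (a : ℕ) (X : Finset ℕ) (hX : X.card = 2 * a) (U V : Finset (Finset ℕ))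
    (hU : U ⊆ powersetCard a X) (hV : V ⊆ powersetCard a X) (hc : Crs U V) :
    U.card + V.card ≤ (2 * a).choose a := by
  have h1 : (V.image (fun B => X \ B)).card = V.card := by
    apply card_image_of_injOn
    intro B hB B' hB' h
    have e1 := (mem_powersetCard.1 (hV hB)).1
    have e2 := (mem_powersetCard.1 (hV hB')).1
    simp only at h
    rw [← Finset.sdiff_sdiff_eq_self e1, ← Finset.sdiff_sdiff_eq_self e2, h]
  rw [← h1, ← card_union_of_disjoint, ← hX, ← card_powersetCard]
  · apply card_le_card
    apply union_subset hU
    intro S hS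
    obtain ⟨B, hB, rfl⟩ := mem_image.1 hS
    have e1 := mem_powersetCard.1 (hV hB)
    rw [mem_powersetCard]
    refine ⟨sdiff_subset, ?_⟩
    rw [card_sdiff_of_subset e1.1]; omega
  · rw [disjoint_left]
    intro S hS hS'
    obtain ⟨B, hB, rfl⟩ := mem_image.1 hS'
    obtain ⟨x, hx⟩ := hc _ hS B hB
    simp at hx

lemma Mt_window (m s a : ℕ) (hs : s ≤ m) (G H : Finset ℕ) (hG : G ⊆ Icc 1 s) (hH : H ⊆ Icc 1 s) :
    ∑ i ∈ range (a + 1), (Mt (Icc 1 s) i G H).card * (m - s).choose (a - i)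
      ≤ (Mt (Icc 1 m) a G H).card := by
  refine (count_eq m s a hs _).trans (le_of_eq ?_)
  congr 1
  ext S
  have e : ∀ K ⊆ Icc 1 s, S ∩ Icc 1 s ∩ K = S ∩ K := by
    intro K hK; rw [inter_assoc, inter_eq_right.2 hK]
  simp only [Mt, mem_filter, e G hG, e H hH]

lemma St_window (m s a : ℕ) (hs : s ≤ m) (G H : Finset ℕ) (hG : G ⊆ Icc 1 s) (hH : H ⊆ Icc 1 s)
    (hs1 : 1 ≤ s) :
    ∑ i ∈ range (a + 1), (St 1 (Icc 1 s) i G H).card * (m - s).choose (a - i)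
      ≤ (St 1 (Icc 1 m) a G H).card := by
  refine (count_eq m s a hs _).trans (le_of_eq ?_)
  congr 1
  ext S
  have e : ∀ K ⊆ Icc 1 s, S ∩ Icc 1 s ∩ K = S ∩ K := by
    intro K hK; rw [inter_assoc, inter_eq_right.2 hK]
  simp only [St, mem_filter, e G hG, e H hH]
  simp [hs1]

lemma swap_sdiff (A Z : Finset ℕ) (i j : ℕ) (hi : i ∈ Z) :
    insert i (A.erase j) \ Z = (A \ Z).erase j := by
  ext x; simp only [mem_sdiff, mem_insert, mem_erase]; grind

lemma first_mem (t a : ℕ) (F : Finset (Finset ℕ)) (sF : Shf t F)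
    (hF : ∀ A ∈ F, A.card = a ∧ ∀ x ∈ A, t ≤ x) (hne : F.Nonempty) :
    Ico t (t + a) ∈ F := by
  suffices h : ∀ N, ∀ A ∈ F, (A \ Ico t (t + a)).card = N → Ico t (t + a) ∈ F by
    obtain ⟨A, hA⟩ := hne
    exact h _ A hA rfl
  intro N
  induction N with
  | zero =>
    intro A hA h
    rw [card_eq_zero, sdiff_eq_empty_iff_subset] at h
    rwa [← eq_of_subset_of_card_le h (by simp [(hF A hA).1])]
  | succ N ih =>
    intro A hA h
    obtain ⟨j, hj⟩ := card_pos.1 (by omega : 0 < (A \ Ico t (t + a)).card)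
    have hc : (A \ Ico t (t+a)).card = (Ico t (t+a) \ A).card := by
      apply card_sdiff_comm; simp [(hF A hA).1]
    obtain ⟨i, hi⟩ := card_pos.1 (by omega : 0 < (Ico t (t + a) \ A).card)
    simp only [mem_sdiff, mem_Ico] at hi hj
    have := (hF A hA).2 j hj.1
    refine ih _ (sF A hA i j hi.1.1 (by omega) hj.1 hi.2) ?_
    have : insert i (A.erase j) \ Ico t (t + a) = (A \ Ico t (t + a)).erase j := by
      exact swap_sdiff _ _ _ _ (by simp; omega)
    rw [this, card_erase_of_mem (by simp only [mem_sdiff, mem_Ico]; exact hj)]; omega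

lemma second_mem (t a : ℕ) (ha : 1 ≤ a) (F : Finset (Finset ℕ)) (sF : Shf t F)
    (hF : ∀ A ∈ F, A.card = a ∧ ∀ x ∈ A, t ≤ x) (hne : 2 ≤ F.card) :
    insert (t + a) (Ico t (t + a - 1)) ∈ F := by
  have hcH : (insert (t + a) (Ico t (t + a - 1))).card = a := by
    rw [card_insert_of_notMem (by simp)]; simp; omega
  suffices h : ∀ N, ∀ A ∈ F, t + a ∈ A → (A \ insert (t + a) (Ico t (t + a - 1))).card = N →
      insert (t + a) (Ico t (t + a - 1)) ∈ F by
    obtain ⟨A, hA, hAG⟩ := exists_mem_ne (by omega : 1 < F.card) (Ico t (t + a))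
    by_cases hta : t + a ∈ A
    · exact h _ A hA hta rfl
    · have : ∃ j ∈ A, t + a < j := by
        by_contra hcon
        push Not at hcon
        apply hAG
        apply eq_of_subset_of_card_le
        · intro x hx
          have h1 := hcon x hx
          have h2 := (hF A hA).2 x hx
          have : x ≠ t + a := fun h => hta (h ▸ hx)
          simp; omega
        · simp [(hF A hA).1]
      obtain ⟨j, hj, hlt⟩ := this
      exact h _ _ (sF A hA (t + a) j (by omega) hlt hj hta) (mem_insert_self _ _) rfl
  intro N
  induction N with
  | zero =>
    intro A hA _ h
    rw [card_eq_zero, sdiff_eq_empty_iff_subset] at h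
    rwa [← eq_of_subset_of_card_le h (by rw [hcH, (hF A hA).1])]
  | succ N ih =>
    intro A hA hta h
    obtain ⟨j, hj⟩ := card_pos.1 (by omega : 0 < (A \ insert (t + a) (Ico t (t + a - 1))).card)
    have hc : (A \ insert (t + a) (Ico t (t + a - 1))).card
        = (insert (t + a) (Ico t (t + a - 1)) \ A).card := by
      apply card_sdiff_comm; rw [hcH, (hF A hA).1]
    obtain ⟨i, hi⟩ := card_pos.1 (by omega : 0 < (insert (t + a) (Ico t (t + a - 1)) \ A).card)
    simp only [mem_sdiff, mem_Ico, mem_insert] at hi hj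
    have h1 := (hF A hA).2 j hj.1
    have hit : i ≠ t + a := fun h => hi.2 (h ▸ hta)
    refine ih _ (sF A hA i j (by omega) (by omega) hj.1 hi.2)
      (mem_insert_of_mem (mem_erase.2 ⟨by omega, hta⟩)) ?_
    have : insert i (A.erase j) \ insert (t + a) (Ico t (t + a - 1))
        = (A \ insert (t + a) (Ico t (t + a - 1))).erase j := by
      exact swap_sdiff _ _ _ _ (by simp only [mem_insert, mem_Ico]; exact hi.1)
    rw [this, card_erase_of_mem (by simp only [mem_sdiff, mem_Ico, mem_insert]; exact hj)]; omega

/-! binomial inequalities -/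
lemma ineq1 (a i : ℕ) (h1 : 1 ≤ i) (h2 : i < a) : a.choose i + 1 ≤ (2 * a - i).choose i := by
  have h : (a + 1).choose i ≤ (2 * a - i).choose i := Nat.choose_le_choose i (by omega)
  obtain ⟨t, rfl⟩ : ∃ t, i = t + 1 := ⟨i - 1, by omega⟩
  rw [Nat.choose_succ_succ] at h
  have := Nat.choose_pos (by omega : t ≤ a)
  simp only [Nat.succ_eq_add_one] at h
  omega

lemma ineq1s (a : ℕ) (h : 3 ≤ a) :
    a.choose (a-1) + 1 < (2 * a - (a-1)).choose (a-1) := by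
  obtain ⟨b, rfl⟩ : ∃ b, a = b + 2 := ⟨a - 2, by omega⟩
  have e : 2 * (b + 2) - (b + 2 - 1) = b + 3 := by omega
  rw [e, show b + 2 - 1 = b + 1 from rfl, Nat.choose_succ_succ (b+2) b]
  have : (b+2).choose b = (b+2).choose 2 := by
    rw [← Nat.choose_symm_add, Nat.add_comm]
  have h3 : 3 ≤ (b+2).choose 2 := (by decide : 3 ≤ Nat.choose 3 2).trans
    (Nat.choose_le_choose 2 (by omega))
  simp only [Nat.succ_eq_add_one]
  omega

lemma ineq2 (a i : ℕ) (h3 : 3 ≤ a) (h1 : 1 ≤ i) (h2 : i < a) :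
    2 * a.choose i + 1 ≤ (2 * a - i).choose i + (a - 1).choose i := by
  rcases Nat.eq_or_lt_of_le h1 with rfl | h1
  · simp; omega
  have h : (a + 1).choose i ≤ (2 * a - i).choose i := Nat.choose_le_choose i (by omega)
  obtain ⟨t, rfl⟩ : ∃ t, i = t + 2 := ⟨i - 2, by omega⟩
  obtain ⟨b, rfl⟩ : ∃ b, a = b + 1 := ⟨a - 1, by omega⟩
  have e1 := Nat.choose_succ_succ (b+1) (t+1)
  have e2 := Nat.choose_succ_succ b (t+1)
  have e3 := Nat.choose_succ_succ b t
  have := Nat.choose_pos (by omega : t ≤ b)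
  simp only [Nat.succ_eq_add_one, Nat.add_sub_cancel, Nat.add_assoc, Nat.reduceAdd] at *
  omega

lemma ineq2s (a : ℕ) (h4 : 4 ≤ a) :
    2 * a.choose (a-1) + 1 < (2 * a - (a-1)).choose (a-1) + (a - 1).choose (a-1) := by
  obtain ⟨b, rfl⟩ : ∃ b, a = b + 3 := ⟨a - 3, by omega⟩
  have e : 2 * (b + 3) - (b + 3 - 1) = b + 4 := by omega
  rw [e, show b + 3 - 1 = b + 2 from rfl]
  have e1 := Nat.choose_succ_succ (b+3) (b+1)
  have e2 := Nat.choose_succ_succ (b+2) (b+1)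
  have e3 := Nat.choose_succ_succ (b+2) b
  have : (b+2).choose b = (b+2).choose 2 := by
    rw [← Nat.choose_symm_add, Nat.add_comm]
  have h3 : 3 ≤ (b+2).choose 2 := (by decide : 3 ≤ Nat.choose 3 2).trans
    (Nat.choose_le_choose 2 (by omega))
  simp only [Nat.succ_eq_add_one, Nat.add_assoc, Nat.reduceAdd] at *
  omega

lemma tr_sub_Mt (m a i : ℕ) (U V : Finset (Finset ℕ)) (hU : U ⊆ powersetCard a (Icc 1 m))
    (hV : V ⊆ powersetCard a (Icc 1 m)) (sU : Shf 1 U) (hc : Crs U V)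
    (G H : Finset ℕ) (hG : G ∈ V) (hH : H ∈ V) :
    tr (2 * a) U i ⊆ Mt (Icc 1 (2 * a)) i G H := by
  intro S hS
  have h1 := tr_sub _ _ _ hS
  obtain ⟨⟨A, hA, rfl⟩, -⟩ := mem_tr.1 hS
  have w := window m (2*a) a a U V hU hV sU hc (by omega) A hA
  refine mem_filter.2 ⟨h1, ?_, ?_⟩
  · obtain ⟨x, hx⟩ := w G hG
    exact ⟨x, by simp only [mem_inter] at hx ⊢; tauto⟩
  · obtain ⟨x, hx⟩ := w H hH
    exact ⟨x, by simp only [mem_inter] at hx ⊢; tauto⟩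

/-- if the traces of size one less are everything, then V is contained in a pair -/
lemma CS_struct (m a : ℕ) (h3 : 3 ≤ a) (U V : Finset (Finset ℕ))
    (hU : U ⊆ powersetCard a (Icc 1 m)) (hV : V ⊆ powersetCard a (Icc 1 m)) (sU : Shf 1 U)
    (hc : Crs U V) (G H : Finset ℕ) (hG : G ∈ V) (hH : H ∈ V)
    (hGs : G ⊆ Icc 1 (2 * a)) (hHs : H ⊆ Icc 1 (2 * a))
    (hall : Mt (Icc 1 (2 * a)) (a - 1) G H ⊆ tr (2 * a) U (a - 1)) :
    ∀ P ∈ V, P = G ∨ P = H := by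
  intro P hP
  by_contra hcon
  push Not at hcon
  have hPc := (mem_powersetCard.1 (hV hP)).2
  have hex : ∀ K ∈ V, P ≠ K → ∃ g ∈ K, g ∉ P := by
    intro K hK hne
    by_contra h
    push Not at h
    exact hne (eq_of_subset_of_card_le h (by rw [hPc, (mem_powersetCard.1 (hV hK)).2])).symm
  obtain ⟨g, hgG, hgP⟩ := hex G hG hcon.1
  obtain ⟨h, hhH, hhP⟩ := hex H hH hcon.2
  obtain ⟨S, hS1, hS2, hS3⟩ := exists_subsuperset_card_eq (s := {g, h})
    (t := Icc 1 (2 * a) \ P) (n := a - 1)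
    (by
      intro x hx
      simp only [mem_insert, mem_singleton] at hx
      rcases hx with rfl | rfl
      · exact mem_sdiff.2 ⟨hGs hgG, hgP⟩
      · exact mem_sdiff.2 ⟨hHs hhH, hhP⟩)
    ((card_le_two).trans (by omega))
    (by
      have := le_card_sdiff P (Icc 1 (2 * a))
      simp at this; omega)
  have hST : S ∈ Mt (Icc 1 (2 * a)) (a - 1) G H := by
    refine mem_filter.2 ⟨mem_powersetCard.2 ⟨hS2.trans sdiff_subset, hS3⟩, ?_, ?_⟩
    · exact ⟨g, mem_inter.2 ⟨hS1 (by simp), hgG⟩⟩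
    · exact ⟨h, mem_inter.2 ⟨hS1 (by simp), hhH⟩⟩
  obtain ⟨⟨A, hA, hAS⟩, -⟩ := mem_tr.1 (hall hST)
  obtain ⟨x, hx⟩ := window m (2*a) a a U V hU hV sU hc (by omega) A hA P hP
  have hxS : x ∈ S := by
    rw [← hAS]; simp only [mem_inter] at hx ⊢; tauto
  have := hS2 hxS
  simp only [mem_inter, mem_sdiff] at hx this
  tauto

lemma Crs.symm {U V : Finset (Finset ℕ)} (h : Crs U V) : Crs V U := by
  intro A hA B hB; rw [inter_comm]; exact h B hB A hA

lemma CS (a m e : ℕ) (hm : 2 * a ≤ m) (U V : Finset (Finset ℕ))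
    (hU : U ⊆ powersetCard a (Icc 1 m)) (hV : V ⊆ powersetCard a (Icc 1 m))
    (sU : Shf 1 U) (sV : Shf 1 V) (hc : Crs U V) (G H : Finset ℕ)
    (hGU : G ∈ U) (hHU : H ∈ U) (hGV : G ∈ V) (hHV : H ∈ V)
    (hGs : G ⊆ Icc 1 (2 * a)) (hHs : H ⊆ Icc 1 (2 * a))
    (he : (2 * a).choose a ≤ (Mt (Icc 1 (2 * a)) a G H).card + e)
    (hi : ∀ i, 1 ≤ i → i < a → ∀ U' V', U' ⊆ powersetCard i (Icc 1 (2 * a)) →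
      V' ⊆ powersetCard i (Icc 1 (2 * a)) → Shf 1 U' → Shf 1 V' → Crs U' V' → U'.Nonempty →
      V'.Nonempty → U'.card + V'.card ≤ (Mt (Icc 1 (2 * a)) i G H).card) :
    U.card + V.card ≤ (Mt (Icc 1 m) a G H).card + e ∧
    (3 ≤ a → 2 * a < m → (∀ U' V', U' ⊆ powersetCard (a-1) (Icc 1 (2 * a)) →
      V' ⊆ powersetCard (a-1) (Icc 1 (2 * a)) → Shf 1 U' → Shf 1 V' → Crs U' V' → U'.Nonempty →
      V'.Nonempty → U'.card + V'.card < (Mt (Icc 1 (2 * a)) (a-1) G H).card) →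
      U.card + V.card = (Mt (Icc 1 m) a G H).card + e →
      (∀ P ∈ U, P = G ∨ P = H) ∨ (∀ P ∈ V, P = G ∨ P = H)) := by
  have c1 := count_le m (2*a) a hm U hU
  have c2 := count_le m (2*a) a hm V hV
  have c3 := Mt_window m (2*a) a hm G H hGs hHs
  have c4 : U.card + V.card ≤ ∑ i ∈ range (a + 1),
      ((tr (2*a) U i).card + (tr (2*a) V i).card) * (m - 2*a).choose (a - i) := by
    simp only [add_mul, sum_add_distrib]; omega
  have crs := fun i => tr_crs m (2*a) a a i i U V hU hV sU hc (by omega)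
  have sbU := fun i => tr_sub_Mt m a i U V hU hV sU hc G H hGV hHV
  have sbV := fun i => tr_sub_Mt m a i V U hV hU sV hc.symm G H hGU hHU
  have hle : ∀ i < a, (tr (2*a) U i).card + (tr (2*a) V i).card
      ≤ (Mt (Icc 1 (2 * a)) i G H).card := by
    intro i hia
    rcases (tr (2*a) U i).eq_empty_or_nonempty with h | h
    · rw [h, card_empty, zero_add]
      exact card_le_card (sbV i)
    rcases (tr (2*a) V i).eq_empty_or_nonempty with h' | h'
    · rw [h', card_empty, add_zero]
      exact card_le_card (sbU i)
    have hi1 : 1 ≤ i := by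
      obtain ⟨S, hS⟩ := h
      obtain ⟨R, hR⟩ := h'
      obtain ⟨x, hx⟩ := crs i S hS R hR
      rw [← (mem_tr.1 hS).2]
      exact card_pos.2 ⟨x, (mem_inter.1 hx).1⟩
    exact hi i hi1 hia _ _ (tr_sub _ _ _) (tr_sub _ _ _) (tr_shf _ _ _ sU) (tr_shf _ _ _ sV)
      (crs i) h h'
  have hla : (tr (2*a) U a).card + (tr (2*a) V a).card ≤ (Mt (Icc 1 (2 * a)) a G H).card + e :=
    (compl_pair_le a (Icc 1 (2*a)) (by simp) _ _ (tr_sub _ _ _) (tr_sub _ _ _) (crs a)).trans he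
  refine ⟨?_, ?_⟩
  · have := cmp_le a e (fun i => (tr (2*a) U i).card + (tr (2*a) V i).card)
      (fun i => (Mt (Icc 1 (2 * a)) i G H).card)
      (fun i => (m - 2*a).choose (a - i)) (by simp) hle hla
    exact c4.trans (this.trans (Nat.add_le_add_right c3 e))
  · intro h3 hm' hst heq
    have hnlt : ¬ ((tr (2*a) U (a-1)).card + (tr (2*a) V (a-1)).card
        < (Mt (Icc 1 (2 * a)) (a-1) G H).card) := by
      intro hlt
      obtain ⟨b, rfl⟩ : ∃ b, a = b + 1 := ⟨a - 1, by omega⟩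
      have := cmp_lt b e (fun i => (tr (2*(b+1)) U i).card + (tr (2*(b+1)) V i).card)
        (fun i => (Mt (Icc 1 (2 * (b+1))) i G H).card)
        (fun i => (m - 2*(b+1)).choose (b + 1 - i)) (by simp) (by simp; omega) hle hla hlt
      exact absurd heq (ne_of_lt (lt_of_le_of_lt c4
        (lt_of_lt_of_le this (Nat.add_le_add_right c3 e))))
    rcases (tr (2*a) U (a-1)).eq_empty_or_nonempty with h | h
    · left
      apply CS_struct m a h3 V U hV hU sV hc.symm G H hGU hHU hGs hHs
      rw [h, card_empty, zero_add, not_lt] at hnlt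
      rw [eq_of_subset_of_card_le (sbV _) hnlt]
    rcases (tr (2*a) V (a-1)).eq_empty_or_nonempty with h' | h'
    · right
      apply CS_struct m a h3 U V hU hV sU hc G H hGV hHV hGs hHs
      rw [h', card_empty, add_zero, not_lt] at hnlt
      rw [eq_of_subset_of_card_le (sbU _) hnlt]
    exact absurd (hst _ _ (tr_sub _ _ _) (tr_sub _ _ _) (tr_shf _ _ _ sU) (tr_shf _ _ _ sV)
      (crs _) h h') hnlt

lemma C1s (a : ℕ) : ∀ (m : ℕ), 1 ≤ a → 2 * a ≤ m → ∀ (U V : Finset (Finset ℕ)),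
    U ⊆ powersetCard a (Icc 1 m) → V ⊆ powersetCard a (Icc 1 m) →
    Shf 1 U → Shf 1 V → Crs U V → U.Nonempty → V.Nonempty →
    U.card + V.card + (m - a).choose a ≤ m.choose a + 1 ∧
    (3 ≤ a → 2 * a < m → U.card + V.card + (m - a).choose a = m.choose a + 1 →
      U.card = 1 ∨ V.card = 1) := by
  induction a using Nat.strong_induction_on with
  | _ a ih =>
  intro m ha hm U V hU hV sU sV hc hUn hVn
  have hG : ∀ W : Finset (Finset ℕ), W ⊆ powersetCard a (Icc 1 m) → Shf 1 W → W.Nonempty →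
      Ico 1 (1 + a) ∈ W := by
    intro W hW sW hWn
    apply first_mem 1 a W sW _ hWn
    intro A hA
    have := mem_powersetCard.1 (hW hA)
    exact ⟨this.2, fun x hx => (mem_Icc.1 (this.1 hx)).1⟩
  have hGU := hG U hU sU hUn
  have hGV := hG V hV sV hVn
  have hcard : ∀ s i, 2 * a ≤ s → (Mt (Icc 1 s) i (Ico 1 (1+a)) (Ico 1 (1+a))).card
      + (s - a).choose i = s.choose i := by
    intro s i hs
    have hsub : Ico 1 (1+a) ⊆ Icc 1 s := by
      intro x; simp only [mem_Ico, mem_Icc]; omega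
    have := Mt_card (Icc 1 s) i _ _ hsub hsub
    simp at this
    omega
  have hsub : Ico 1 (1+a) ⊆ Icc 1 (2 * a) := by
      intro x; simp only [mem_Ico, mem_Icc]; omega
  have key := CS a m 1 hm U V hU hV sU sV hc _ _ hGU hGU hGV hGV hsub hsub
    (by
      have := hcard (2*a) a le_rfl
      rw [show 2 * a - a = a by omega, Nat.choose_self] at this
      omega)
    (by
      intro i h1 h2 U' V' hU' hV' sU' sV' hc' hUn' hVn'
      have e1 := (ih i h2 (2*a) h1 (by omega) U' V' hU' hV' sU' sV' hc' hUn' hVn').1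
      have e2 := ineq1 a i h1 h2
      have e3 := hcard (2*a) i le_rfl
      rw [show 2 * a - a = a by omega] at e3
      omega)
  have hcm := hcard m a hm
  refine ⟨by omega, ?_⟩
  intro h3 hm' heq
  have := key.2 h3 hm' (by
      intro U' V' hU' hV' sU' sV' hc' hUn' hVn'
      have e1 := (ih (a-1) (by omega) (2*a) (by omega) (by omega) U' V' hU' hV' sU' sV' hc' hUn'
        hVn').1
      have e2 := ineq1s a h3
      have e3 := hcard (2*a) (a-1) le_rfl
      rw [show 2 * a - a = a by omega] at e3
      omega) (by omega)
  have hone : ∀ W : Finset (Finset ℕ), W.Nonempty →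
      (∀ P ∈ W, P = Ico 1 (1+a) ∨ P = Ico 1 (1+a)) → W.card = 1 := by
    intro W hW h
    have : W.card ≤ 1 := by
      rw [card_le_one]
      intro A hA B hB
      rw [or_self_iff.1 (h A hA), or_self_iff.1 (h B hB)]
    have := card_pos.2 hW
    omega
  rcases this with h | h
  · exact Or.inl (hone U hUn h)
  · exact Or.inr (hone V hVn h)

lemma C2s (a m : ℕ) (ha : 3 ≤ a) (hm : 2 * a ≤ m) (U V : Finset (Finset ℕ))
    (hU : U ⊆ powersetCard a (Icc 1 m)) (hV : V ⊆ powersetCard a (Icc 1 m))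
    (sU : Shf 1 U) (sV : Shf 1 V) (hc : Crs U V) (hUn : 2 ≤ U.card) (hVn : 2 ≤ V.card) :
    U.card + V.card + 2 * (m - a).choose a ≤ m.choose a + (m - a - 1).choose a + 2 ∧
    (4 ≤ a → 2 * a < m →
      U.card + V.card + 2 * (m - a).choose a = m.choose a + (m - a - 1).choose a + 2 →
      U.card = 2 ∨ V.card = 2) := by
  have hbd : ∀ W : Finset (Finset ℕ), W ⊆ powersetCard a (Icc 1 m) →
      ∀ A ∈ W, A.card = a ∧ ∀ x ∈ A, 1 ≤ x := by
    intro W hW A hA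
    have := mem_powersetCard.1 (hW hA)
    exact ⟨this.2, fun x hx => (mem_Icc.1 (this.1 hx)).1⟩
  have hGU := first_mem 1 a U sU (hbd U hU) (card_pos.1 (by omega))
  have hGV := first_mem 1 a V sV (hbd V hV) (card_pos.1 (by omega))
  have hHU := second_mem 1 a (by omega) U sU (hbd U hU) hUn
  have hHV := second_mem 1 a (by omega) V sV (hbd V hV) hVn
  set G := Ico 1 (1 + a) with hG
  set H := insert (1 + a) (Ico 1 (1 + a - 1)) with hH
  have hGc : G.card = a := (hbd U hU G hGU).1
  have hHc : H.card = a := (hbd U hU H hHU).1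
  have hGH : (G ∪ H).card = a + 1 := by
    have : G ∪ H = Icc 1 (a+1) := by
      ext x; simp only [hG, hH, mem_union, mem_insert, mem_Ico, mem_Icc]; omega
    rw [this]; simp
  have hsG : ∀ s, 2 * a ≤ s → G ⊆ Icc 1 s := by
    intro s hs x; simp only [hG, mem_Ico, mem_Icc]; omega
  have hsH : ∀ s, 2 * a ≤ s → H ⊆ Icc 1 s := by
    intro s hs x; simp only [hH, mem_insert, mem_Ico, mem_Icc]; omega
  have hcard : ∀ s i, 2 * a ≤ s → (Mt (Icc 1 s) i G H).card
      + 2 * (s - a).choose i = s.choose i + (s - a - 1).choose i := by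
    intro s i hs
    have := Mt_card (Icc 1 s) i _ _ (hsG s hs) (hsH s hs)
    rw [hGc, hHc, hGH] at this
    simp only [Nat.card_Icc, Nat.add_sub_cancel] at this
    rw [Nat.sub_sub]
    omega
  have hcard2 : ∀ i, (Mt (Icc 1 (2*a)) i G H).card
      + 2 * a.choose i = (2*a).choose i + (a - 1).choose i := by
    intro i
    have := hcard (2*a) i le_rfl
    rwa [show 2 * a - a = a by omega] at this
  have key := CS a m 2 hm U V hU hV sU sV hc _ _ hGU hHU hGV hHV (hsG _ le_rfl) (hsH _ le_rfl)
    (by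
      have := hcard2 a
      rw [Nat.choose_self] at this
      omega)
    (by
      intro i h1 h2 U' V' hU' hV' sU' sV' hc' hUn' hVn'
      have e1 := (C1s i (2*a) h1 (by omega) U' V' hU' hV' sU' sV' hc' hUn' hVn').1
      have e2 := ineq2 a i ha h1 h2
      have e3 := hcard2 i
      omega)
  have hcm := hcard m a hm
  refine ⟨by omega, ?_⟩
  intro h3 hm' heq
  have := key.2 ha hm' (by
      intro U' V' hU' hV' sU' sV' hc' hUn' hVn'
      have e1 := (C1s (a-1) (2*a) (by omega) (by omega) U' V' hU' hV' sU' sV' hc' hUn'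
        hVn').1
      have e2 := ineq2s a h3
      have e3 := hcard2 (a-1)
      omega) (by omega)
  have htwo : ∀ W : Finset (Finset ℕ), 2 ≤ W.card →
      (∀ P ∈ W, P = G ∨ P = H) → W.card = 2 := by
    intro W hW h
    have : W ⊆ {G, H} := by
      intro P hP; simp only [mem_insert, mem_singleton]; exact h P hP
    have := (card_le_card this).trans card_le_two
    omega
  rcases this with h | h
  · exact Or.inl (htwo U hUn h)
  · exact Or.inr (htwo V hVn h)

lemma IS (k n e : ℕ) (hk : 1 ≤ k) (hn : 2 * k ≤ n) (F : Finset (Finset ℕ))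
    (hF : F ⊆ powersetCard k (Icc 1 n)) (sF : Shf 1 F) (hc : Crs F F) (G H : Finset ℕ)
    (hG : G ∈ F) (hH : H ∈ F) (hGs : G ⊆ Icc 2 (2 * k)) (hHs : H ⊆ Icc 2 (2 * k))
    (he : (2 * k - 1).choose (k - 1) ≤ (St 1 (Icc 1 (2 * k)) k G H).card + e)
    (hi : ∀ i, 2 ≤ i → i < k → ∀ A, A ⊆ powersetCard i (Icc 1 (2 * k)) → Shf 1 A → Crs A A →
      (∃ S ∈ A, 1 ∉ S) → A.card ≤ (St 1 (Icc 1 (2 * k)) i G H).card) :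
    F.card ≤ (St 1 (Icc 1 n) k G H).card + e ∧
    (4 ≤ k → 2 * k < n → (∀ A, A ⊆ powersetCard (k-1) (Icc 1 (2 * k)) → Shf 1 A → Crs A A →
      (∃ S ∈ A, 1 ∉ S) → A.card < (St 1 (Icc 1 (2 * k)) (k-1) G H).card) →
      F.card = (St 1 (Icc 1 n) k G H).card + e → ∀ P ∈ F, 1 ∉ P → P = G ∨ P = H) := by
  have hGs' : G ⊆ Icc 1 (2 * k) := hGs.trans (Icc_subset_Icc_left (by omega))
  have hHs' : H ⊆ Icc 1 (2 * k) := hHs.trans (Icc_subset_Icc_left (by omega))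
  have c1 := count_le n (2*k) k hn F hF
  have c3 := St_window n (2*k) k hn G H hGs' hHs' (by omega)
  have crs := fun i => tr_crs n (2*k) k k i i F F hF hF sF hc (by omega)
  have hsub : ∀ i, (¬ ∃ S ∈ tr (2*k) F i, 1 ∉ S) → tr (2*k) F i ⊆ St 1 (Icc 1 (2 * k)) i G H := by
    intro i hne S hS
    push Not at hne
    have h1 := tr_sub _ _ _ hS
    have h2 := hne S hS
    obtain ⟨⟨A, hA, rfl⟩, -⟩ := mem_tr.1 hS
    have w := window n (2*k) k k F F hF hF sF hc (by omega) A hA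
    refine mem_filter.2 ⟨h1, h2, ?_, ?_⟩
    · obtain ⟨x, hx⟩ := w G hG
      exact ⟨x, by simp only [mem_inter] at hx ⊢; tauto⟩
    · obtain ⟨x, hx⟩ := w H hH
      exact ⟨x, by simp only [mem_inter] at hx ⊢; tauto⟩
  have hle : ∀ i < k, (tr (2*k) F i).card ≤ (St 1 (Icc 1 (2 * k)) i G H).card := by
    intro i hik
    by_cases hne : ∃ S ∈ tr (2*k) F i, 1 ∉ S
    · obtain ⟨S, hS, h1S⟩ := hne
      have hSc := (mem_tr.1 hS).2
      have h2i : 2 ≤ i := by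
        obtain ⟨x, hx⟩ := crs i S hS S hS
        have hxS := (mem_inter.1 hx).1
        have hx1 := (mem_Icc.1 ((mem_powersetCard.1 (tr_sub _ _ _ hS)).1 hxS)).1
        have hxn : x ≠ 1 := fun h => h1S (h ▸ hxS)
        obtain ⟨y, hy⟩ := crs i S hS _ (tr_shf _ _ _ sF S hS 1 x le_rfl (by omega) hxS h1S)
        simp only [mem_inter, mem_insert, mem_erase] at hy
        have hyx : y ≠ x := by
          rcases hy.2 with rfl | h
          · exact hxn.symm
          · exact h.1
        rw [← hSc]
        exact one_lt_card.2 ⟨y, hy.1, x, hxS, hyx⟩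
      exact hi i h2i hik _ (tr_sub _ _ _) (tr_shf _ _ _ sF) (crs i) ⟨S, hS, h1S⟩
    · exact card_le_card (hsub i hne)
  have hla : (tr (2*k) F k).card ≤ (St 1 (Icc 1 (2 * k)) k G H).card + e := by
    have := compl_pair_le k (Icc 1 (2*k)) (by simp) _ _ (tr_sub _ F _) (tr_sub _ F _) (crs k)
    obtain ⟨b, rfl⟩ : ∃ b, k = b + 1 := ⟨k - 1, by omega⟩
    have e1 : (2 * (b+1)).choose (b+1) = 2 * (2 * (b+1) - 1).choose (b + 1 - 1) := by
      rw [show 2 * (b+1) = 2 * b + 1 + 1 by ring, Nat.choose_succ_succ,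
        show 2 * b + 1 + 1 - 1 = 2 * b + 1 by omega, show b + 1 - 1 = b by omega]
      have := Nat.choose_symm_half b
      simp only [Nat.succ_eq_add_one]
      omega
    omega
  refine ⟨?_, ?_⟩
  · have := cmp_le k e (fun i => (tr (2*k) F i).card)
      (fun i => (St 1 (Icc 1 (2 * k)) i G H).card)
      (fun i => (n - 2*k).choose (k - i)) (by simp) hle hla
    exact c1.trans (this.trans (Nat.add_le_add_right c3 e))
  · intro h4 hn' hst heq
    have hnlt : ¬ ((tr (2*k) F (k-1)).card < (St 1 (Icc 1 (2 * k)) (k-1) G H).card) := by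
      intro hlt
      obtain ⟨b, rfl⟩ : ∃ b, k = b + 1 := ⟨k - 1, by omega⟩
      have := cmp_lt b e (fun i => (tr (2*(b+1)) F i).card)
        (fun i => (St 1 (Icc 1 (2 * (b+1))) i G H).card)
        (fun i => (n - 2*(b+1)).choose (b + 1 - i)) (by simp) (by simp; omega) hle hla hlt
      exact absurd heq (ne_of_lt (lt_of_le_of_lt c1
        (lt_of_lt_of_le this (Nat.add_le_add_right c3 e))))
    by_cases hne : ∃ S ∈ tr (2*k) F (k-1), 1 ∉ S
    · exact absurd (hst _ (tr_sub _ _ _) (tr_shf _ _ _ sF) (crs _) hne) hnlt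
    have hall := eq_of_subset_of_card_le (hsub _ hne) (not_lt.1 hnlt)
    intro P hP h1P
    by_contra hcon
    push Not at hcon
    have hPc := (mem_powersetCard.1 (hF hP)).2
    have hex : ∀ K ∈ F, P ≠ K → ∃ g ∈ K, g ∉ P := by
      intro K hK hne
      by_contra h
      push Not at h
      exact hne (eq_of_subset_of_card_le h (by rw [hPc, (mem_powersetCard.1 (hF hK)).2])).symm
    obtain ⟨g, hgG, hgP⟩ := hex G hG hcon.1
    obtain ⟨h, hhH, hhP⟩ := hex H hH hcon.2
    obtain ⟨S, hS1, hS2, hS3⟩ := exists_subsuperset_card_eq (s := {1, g, h})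
      (t := Icc 1 (2 * k) \ P) (n := k - 1)
      (by
        intro x hx
        simp only [mem_insert, mem_singleton] at hx
        rcases hx with rfl | rfl | rfl
        · exact mem_sdiff.2 ⟨by simp; omega, h1P⟩
        · exact mem_sdiff.2 ⟨hGs' hgG, hgP⟩
        · exact mem_sdiff.2 ⟨hHs' hhH, hhP⟩)
      ((card_le_three).trans (by omega))
      (by
        have := le_card_sdiff P (Icc 1 (2 * k))
        simp at this; omega)
    have hST : S ∈ tr (2 * k) F (k-1) := by
      rw [hall]
      refine mem_filter.2 ⟨mem_powersetCard.2 ⟨hS2.trans sdiff_subset, hS3⟩, hS1 (by simp), ?_, ?_⟩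
      · exact ⟨g, mem_inter.2 ⟨hS1 (by simp), hgG⟩⟩
      · exact ⟨h, mem_inter.2 ⟨hS1 (by simp), hhH⟩⟩
    obtain ⟨⟨A, hA, hAS⟩, -⟩ := mem_tr.1 hST
    obtain ⟨x, hx⟩ := window n (2*k) k k F F hF hF sF hc (by omega) A hA P hP
    have hxS : x ∈ S := by
      rw [← hAS]; simp only [mem_inter] at hx ⊢; tauto
    have := hS2 hxS
    simp only [mem_inter, mem_sdiff] at hx this
    tauto

lemma miss_shf (F : Finset (Finset ℕ)) (sF : Shf 1 F) : Shf 2 (F.filter (fun A => 1 ∉ A)) := by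
  intro A hA i j hi hij hj hiA
  have h := mem_filter.1 hA
  refine mem_filter.2 ⟨sF A h.1 i j (by omega) hij hj hiA, ?_⟩
  simp only [mem_insert, mem_erase, not_or, not_and]
  exact ⟨by omega, fun _ => h.2⟩

lemma miss_bd (k n : ℕ) (F : Finset (Finset ℕ)) (hF : F ⊆ powersetCard k (Icc 1 n)) :
    ∀ A ∈ F.filter (fun A => 1 ∉ A), A.card = k ∧ ∀ x ∈ A, 2 ≤ x := by
  intro A hA
  have h := mem_filter.1 hA
  have h' := mem_powersetCard.1 (hF h.1)
  refine ⟨h'.2, fun x hx => ?_⟩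
  have := (mem_Icc.1 (h'.1 hx)).1
  have : x ≠ 1 := fun e => h.2 (e ▸ hx)
  omega

lemma HMs (k : ℕ) : ∀ n, 2 ≤ k → 2 * k ≤ n → ∀ F : Finset (Finset ℕ),
    F ⊆ powersetCard k (Icc 1 n) → Shf 1 F → Crs F F → (∃ S ∈ F, 1 ∉ S) →
    F.card + (n - k - 1).choose (k - 1) ≤ (n - 1).choose (k - 1) + 1 := by
  induction k using Nat.strong_induction_on with
  | _ k ih =>
  intro n hk hn F hF sF hc hne
  have hG : Ico 2 (2 + k) ∈ F := by
    obtain ⟨S, hS, h1⟩ := hne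
    exact (mem_filter.1 (first_mem 2 k _ (miss_shf F sF) (miss_bd k n F hF)
      ⟨S, mem_filter.2 ⟨hS, h1⟩⟩)).1
  have hcard : ∀ s i, 2 * k ≤ s → 1 ≤ i → (St 1 (Icc 1 s) i (Ico 2 (2+k)) (Ico 2 (2+k))).card
      + (s - k - 1).choose (i-1) = (s-1).choose (i-1) := by
    intro s i hs hi
    obtain ⟨t, rfl⟩ : ∃ t, i = t + 1 := ⟨i - 1, by omega⟩
    have hsub : Ico 2 (2+k) ⊆ Icc 1 s := by
      intro x; simp only [mem_Ico, mem_Icc]; omega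
    have := St_card 1 (Icc 1 s) t _ _ (by simp; omega) (by simp) (by simp) hsub hsub
    simp at this
    rw [show s - k - 1 = s - 1 - k by omega]
    simp
    omega
  have hsub : Ico 2 (2+k) ⊆ Icc 2 (2 * k) := by
      intro x; simp only [mem_Ico, mem_Icc]; omega
  have key := (IS k n 1 (by omega) hn F hF sF hc _ _ hG hG hsub hsub
    (by
      have := hcard (2*k) k le_rfl (by omega)
      rw [show 2 * k - k - 1 = k - 1 by omega, Nat.choose_self] at this
      omega)
    (by
      intro i h1 h2 A hA sA hcA hn
      have e1 := ih i h2 (2*k) h1 (by omega) A hA sA hcA hn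
      have e2 := ineq1 (k-1) (i-1) (by omega) (by omega)
      have e3 := hcard (2*k) i le_rfl (by omega)
      rw [show 2 * k - k - 1 = k - 1 by omega] at e3
      rw [show 2 * (k-1) - (i-1) = 2 * k - i - 1 by omega] at e2
      omega)).1
  have hcm := hcard n k hn (by omega)
  omega

lemma baseS (k n : ℕ) (hk : 4 ≤ k) (hn : 2 * k < n) (F : Finset (Finset ℕ))
    (hF : F ⊆ powersetCard k (Icc 1 n)) (sF : Shf 1 F) (hc : Crs F F)
    (h2 : 2 ≤ (F.filter (fun A => 1 ∉ A)).card) :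
    F.card + 2 * (n - k - 1).choose (k - 1) ≤
      (n - 1).choose (k - 1) + (n - k - 2).choose (k - 1) + 2 ∧
    (5 ≤ k → F.card + 2 * (n - k - 1).choose (k - 1) =
      (n - 1).choose (k - 1) + (n - k - 2).choose (k - 1) + 2 →
      (F.filter (fun A => 1 ∉ A)).card ≤ 2) := by
  have hbd := miss_bd k n F hF
  have hG1 := first_mem 2 k _ (miss_shf F sF) hbd (card_pos.1 (by omega))
  have hH1 := second_mem 2 k (by omega) _ (miss_shf F sF) hbd h2
  set G := Ico 2 (2 + k) with hG
  set H := insert (2 + k) (Ico 2 (2 + k - 1)) with hH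
  have hGc : G.card = k := (hbd G hG1).1
  have hHc : H.card = k := (hbd H hH1).1
  have hGH : (G ∪ H).card = k + 1 := by
    have : G ∪ H = Icc 2 (k+2) := by
      ext x; simp only [hG, hH, mem_union, mem_insert, mem_Ico, mem_Icc]; omega
    rw [this]; simp
  have hsG : ∀ s, 2 * k ≤ s → G ⊆ Icc 2 s := by
    intro s hs x; simp only [hG, mem_Ico, mem_Icc]; omega
  have hsH : ∀ s, 2 * k ≤ s → H ⊆ Icc 2 s := by
    intro s hs x; simp only [hH, mem_insert, mem_Ico, mem_Icc]; omega
  have hcard : ∀ s i, 2 * k ≤ s → 1 ≤ i → (St 1 (Icc 1 s) i G H).card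
      + 2 * (s - k - 1).choose (i - 1) = (s - 1).choose (i - 1) + (s - k - 2).choose (i - 1) := by
    intro s i hs hi
    obtain ⟨t, rfl⟩ : ∃ t, i = t + 1 := ⟨i - 1, by omega⟩
    have := St_card 1 (Icc 1 s) t _ _ (by simp; omega) (mem_filter.1 hG1).2 (mem_filter.1 hH1).2
      ((hsG s hs).trans (Icc_subset_Icc_left (by omega)))
      ((hsH s hs).trans (Icc_subset_Icc_left (by omega)))
    rw [hGc, hHc, hGH] at this
    simp only [Nat.card_Icc, Nat.add_sub_cancel] at this
    rw [show s - k - 1 = s - 1 - k by omega, show s - k - 2 = s - 1 - (k + 1) by omega]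
    simp only [Nat.add_sub_cancel]
    omega
  have hcard2 : ∀ i, 1 ≤ i → (St 1 (Icc 1 (2*k)) i G H).card
      + 2 * (k - 1).choose (i-1) = (2*k - 1).choose (i-1) + (k - 1 - 1).choose (i-1) := by
    intro i hi
    have := hcard (2*k) i le_rfl hi
    rwa [show 2 * k - k - 1 = k - 1 by omega, show 2 * k - k - 2 = k - 1 - 1 by omega] at this
  have key := IS k n 2 (by omega) hn.le F hF sF hc G H (mem_filter.1 hG1).1 (mem_filter.1 hH1).1
    (hsG _ le_rfl) (hsH _ le_rfl)
    (by
      have := hcard2 k (by omega)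
      rw [Nat.choose_self] at this
      omega)
    (by
      intro i h1 h2 A hA sA hcA hne
      have e1 := HMs i (2*k) h1 (by omega) A hA sA hcA hne
      have e2 := ineq2 (k-1) (i-1) (by omega) (by omega) (by omega)
      have e3 := hcard2 i (by omega)
      rw [show 2 * (k-1) - (i-1) = 2 * k - i - 1 by omega] at e2
      omega)
  have hcm := hcard n k hn.le (by omega)
  refine ⟨by omega, ?_⟩
  intro h5 heq
  have := key.2 hk hn (by
      intro A hA sA hcA hne
      have e1 := HMs (k-1) (2*k) (by omega) (by omega) A hA sA hcA hne
      have e2 := ineq2s (k-1) (by omega)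
      have e3 := hcard2 (k-1) (by omega)
      rw [show 2 * (k-1) - (k-1-1) = 2 * k - (k-1) - 1 by omega] at e2
      omega) (by omega)
  have hs : F.filter (fun A => 1 ∉ A) ⊆ {G, H} := by
    intro P hP
    simp only [mem_insert, mem_singleton]
    exact this P (mem_filter.1 hP).1 (mem_filter.1 hP).2
  exact (card_le_card hs).trans card_le_two

def sw (i j : ℕ) (A : Finset ℕ) : Finset ℕ := insert i (A.erase j)

def ph (i j : ℕ) (F : Finset (Finset ℕ)) (A : Finset ℕ) : Finset ℕ :=
  if j ∈ A ∧ i ∉ A ∧ sw i j A ∉ F then sw i j A else A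

def sh (i j : ℕ) (F : Finset (Finset ℕ)) : Finset (Finset ℕ) := F.image (ph i j F)

def wt (F : Finset (Finset ℕ)) : ℕ := ∑ A ∈ F, ∑ x ∈ A, x

def miss (F : Finset (Finset ℕ)) (c : ℕ) : ℕ := (F.filter (fun A => c ∉ A)).card

lemma mem_sw {i j x : ℕ} {A : Finset ℕ} : x ∈ sw i j A ↔ x = i ∨ (x ≠ j ∧ x ∈ A) := by
  simp [sw]

lemma sw_inj {i j : ℕ} {A B : Finset ℕ} (hA : j ∈ A) (hA' : i ∉ A) (hB : j ∈ B) (hB' : i ∉ B)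
    (h : sw i j A = sw i j B) : A = B := by
  ext x
  by_cases hx : x = j
  · subst hx; tauto
  by_cases hx' : x = i
  · subst hx'; tauto
  have : x ∈ sw i j A ↔ x ∈ sw i j B := by rw [h]
  rw [mem_sw, mem_sw] at this
  tauto

lemma ph_inj (i j : ℕ) (F : Finset (Finset ℕ)) : Set.InjOn (ph i j F) F := by
  intro A hA B hB h
  simp only [ph] at h
  split_ifs at h with h1 h2 h2
  · exact sw_inj h1.1 h1.2.1 h2.1 h2.2.1 h
  · exact absurd (h ▸ hB) h1.2.2
  · exact absurd (h ▸ hA) h2.2.2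
  · exact h

lemma sh_card (i j : ℕ) (F : Finset (Finset ℕ)) : (sh i j F).card = F.card :=
  card_image_of_injOn (ph_inj i j F)

lemma sw_card {i j : ℕ} {A : Finset ℕ} (hA : j ∈ A) (hA' : i ∉ A) : (sw i j A).card = A.card := by
  rw [sw, card_insert_of_notMem (fun h => hA' (mem_of_mem_erase h)), card_erase_of_mem hA]
  have := card_pos.2 ⟨j, hA⟩
  omega

lemma sh_sub (i j k : ℕ) (X : Finset ℕ) (hi : i ∈ X) (F : Finset (Finset ℕ))
    (hF : F ⊆ powersetCard k X) : sh i j F ⊆ powersetCard k X := by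
  intro B hB
  obtain ⟨A, hA, rfl⟩ := mem_image.1 hB
  simp only [ph]
  split_ifs with h
  · have h' := mem_powersetCard.1 (hF hA)
    refine mem_powersetCard.2 ⟨?_, (sw_card h.1 h.2.1).trans h'.2⟩
    intro x hx
    rcases mem_sw.1 hx with rfl | h
    · exact hi
    · exact h'.1 h.2
  · exact hF hA

lemma sh_crs_aux {i j : ℕ} {A B : Finset ℕ} {V : Finset (Finset ℕ)} (hB : B ∈ V)
    (hAB : ∀ C ∈ V, (A ∩ C).Nonempty) (hj : j ∈ A) (hi : i ∉ A)
    (hm : ¬ (j ∈ B ∧ i ∉ B ∧ sw i j B ∉ V)) : (sw i j A ∩ B).Nonempty := by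
  by_cases hiB : i ∈ B
  · exact ⟨i, mem_inter.2 ⟨mem_sw.2 (Or.inl rfl), hiB⟩⟩
  by_cases hjB : j ∈ B
  · have hs : sw i j B ∈ V := by tauto
    obtain ⟨x, hx⟩ := hAB _ hs
    rw [mem_inter, mem_sw] at hx
    refine ⟨x, ?_⟩
    rw [mem_inter, mem_sw]
    rcases hx with ⟨h1, rfl | h2⟩
    · tauto
    · tauto
  · obtain ⟨x, hx⟩ := hAB _ hB
    rw [mem_inter] at hx
    refine ⟨x, ?_⟩
    rw [mem_inter, mem_sw]
    refine ⟨Or.inr ⟨?_, hx.1⟩, hx.2⟩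
    rintro rfl; exact hjB hx.2

lemma sh_crs (i j : ℕ) (U V : Finset (Finset ℕ)) (hc : Crs U V) : Crs (sh i j U) (sh i j V) := by
  intro A' hA' B' hB'
  obtain ⟨A, hA, rfl⟩ := mem_image.1 hA'
  obtain ⟨B, hB, rfl⟩ := mem_image.1 hB'
  simp only [ph]
  split_ifs with h1 h2 h2
  · exact ⟨i, mem_inter.2 ⟨mem_sw.2 (Or.inl rfl), mem_sw.2 (Or.inl rfl)⟩⟩
  · exact sh_crs_aux hB (hc A hA) h1.1 h1.2.1 h2
  · rw [inter_comm]
    exact sh_crs_aux hA (hc.symm B hB) h2.1 h2.2.1 h1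
  · exact hc A hA B hB

lemma sw_sum {i j : ℕ} (hij : i < j) {A : Finset ℕ} (hA : j ∈ A) (hA' : i ∉ A) :
    ∑ x ∈ sw i j A, x < ∑ x ∈ A, x := by
  rw [sw, sum_insert (fun h => hA' (mem_of_mem_erase h)), ← add_sum_erase A (fun x => x) hA]
  omega

lemma wt_sh (i j : ℕ) (F : Finset (Finset ℕ)) :
    wt (sh i j F) = ∑ A ∈ F, ∑ x ∈ ph i j F A, x := by
  rw [wt, sh, sum_image (ph_inj i j F)]

lemma ph_sum_le (i j : ℕ) (hij : i < j) (F : Finset (Finset ℕ)) (A : Finset ℕ) :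
    ∑ x ∈ ph i j F A, x ≤ ∑ x ∈ A, x := by
  simp only [ph]
  split_ifs with h
  · exact (sw_sum hij h.1 h.2.1).le
  · exact le_rfl

lemma wt_sh_le (i j : ℕ) (hij : i < j) (F : Finset (Finset ℕ)) : wt (sh i j F) ≤ wt F := by
  rw [wt_sh]
  exact sum_le_sum fun A _ => ph_sum_le i j hij F A

lemma wt_sh_lt (i j : ℕ) (hij : i < j) (F : Finset (Finset ℕ)) (A : Finset ℕ) (hA : A ∈ F)
    (hj : j ∈ A) (hi : i ∉ A) (hs : sw i j A ∉ F) : wt (sh i j F) < wt F := by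
  rw [wt_sh]
  refine sum_lt_sum (fun A _ => ph_sum_le i j hij F A) ⟨A, hA, ?_⟩
  rw [ph, if_pos ⟨hj, hi, hs⟩]
  exact sw_sum hij hj hi

lemma miss_sh (i j c : ℕ) (F : Finset (Finset ℕ)) :
    miss (sh i j F) c = (F.filter (fun A => c ∉ ph i j F A)).card := by
  rw [miss, sh, filter_image]
  exact card_image_of_injOn ((ph_inj i j F).mono (by intro x hx; exact (mem_filter.1 hx).1))

lemma miss_sh_ge (i j c : ℕ) (hc : c ≠ i) (F : Finset (Finset ℕ)) :
    miss F c ≤ miss (sh i j F) c := by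
  rw [miss_sh]
  apply card_le_card
  intro A hA
  have h := mem_filter.1 hA
  refine mem_filter.2 ⟨h.1, ?_⟩
  simp only [ph]
  split_ifs
  · rw [mem_sw]; tauto
  · exact h.2

lemma miss_sh_self (i j : ℕ) (F : Finset (Finset ℕ)) :
    (F.filter (fun A => i ∉ A ∧ j ∉ A)).card ≤ miss (sh i j F) i := by
  rw [miss_sh]
  apply card_le_card
  intro A hA
  have h := mem_filter.1 hA
  refine mem_filter.2 ⟨h.1, ?_⟩
  rw [ph, if_neg (by tauto)]
  exact h.2.1

lemma not_shf {F : Finset (Finset ℕ)} (h : ¬ Shf 1 F) :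
    ∃ A ∈ F, ∃ i j, 1 ≤ i ∧ i < j ∧ j ∈ A ∧ i ∉ A ∧ sw i j A ∉ F := by
  simp only [Shf] at h
  push Not at h
  obtain ⟨A, hA, i, j, h1, h2, h3, h4, h5⟩ := h
  exact ⟨A, hA, i, j, h1, h2, h3, h4, h5⟩

lemma toShf (a m : ℕ) : ∀ (N : ℕ) (U V : Finset (Finset ℕ)), wt U + wt V = N →
    U ⊆ powersetCard a (Icc 1 m) → V ⊆ powersetCard a (Icc 1 m) → Crs U V →
    ∃ U' V' : Finset (Finset ℕ), U' ⊆ powersetCard a (Icc 1 m) ∧ V' ⊆ powersetCard a (Icc 1 m) ∧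
      Shf 1 U' ∧ Shf 1 V' ∧ Crs U' V' ∧ U'.card = U.card ∧ V'.card = V.card := by
  intro N
  induction N using Nat.strong_induction_on with
  | _ N ih =>
  intro U V hN hU hV hc
  have step : ∀ i j, 1 ≤ i → i ≤ m → wt (sh i j U) + wt (sh i j V) < N →
    ∃ U' V' : Finset (Finset ℕ), U' ⊆ powersetCard a (Icc 1 m) ∧ V' ⊆ powersetCard a (Icc 1 m) ∧
      Shf 1 U' ∧ Shf 1 V' ∧ Crs U' V' ∧ U'.card = U.card ∧ V'.card = V.card := by
    intro i j h1 h2 hlt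
    have hi : i ∈ Icc 1 m := mem_Icc.2 ⟨h1, h2⟩
    obtain ⟨U', V', a1, a2, a3, a4, a5, a6, a7⟩ := ih _ hlt _ _ rfl (sh_sub i j a _ hi U hU)
      (sh_sub i j a _ hi V hV) (sh_crs i j U V hc)
    exact ⟨U', V', a1, a2, a3, a4, a5, a6.trans (sh_card _ _ _), a7.trans (sh_card _ _ _)⟩
  by_cases sU : Shf 1 U
  · by_cases sV : Shf 1 V
    · exact ⟨U, V, hU, hV, sU, sV, hc, rfl, rfl⟩
    · obtain ⟨A, hA, i, j, h1, hij, hj, hi, hs⟩ := not_shf sV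
      have := (mem_Icc.1 ((mem_powersetCard.1 (hV hA)).1 hj)).2
      apply step i j h1 (by omega)
      have := wt_sh_lt i j hij V A hA hj hi hs
      have := wt_sh_le i j hij U
      omega
  · obtain ⟨A, hA, i, j, h1, hij, hj, hi, hs⟩ := not_shf sU
    have := (mem_Icc.1 ((mem_powersetCard.1 (hU hA)).1 hj)).2
    apply step i j h1 (by omega)
    have := wt_sh_lt i j hij U A hA hj hi hs
    have := wt_sh_le i j hij V
    omega

lemma exists_map (X : Finset ℕ) : ∃ f : ℕ → ℕ, Set.InjOn f X ∧ ∀ x ∈ X, f x ∈ Icc 1 X.card := by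
  let e : X ≃ Icc 1 X.card := Finset.equivOfCardEq (by simp)
  refine ⟨fun x => if h : x ∈ X then (e ⟨x, h⟩ : ℕ) else 0, ?_, ?_⟩
  · intro x hx y hy h
    have hx' : x ∈ X := hx
    have hy' : y ∈ X := hy
    simp only [hx', hy', dif_pos] at h
    have := e.injective (Subtype.ext h)
    exact congrArg Subtype.val this
  · intro x hx
    simp only [hx, dif_pos]
    exact (e ⟨x, hx⟩).2

lemma img_card (a : ℕ) (X : Finset ℕ) (f : ℕ → ℕ) (hf : Set.InjOn f X) (U : Finset (Finset ℕ))
    (hU : U ⊆ powersetCard a X) : (U.image (fun A => A.image f)).card = U.card := by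
  apply card_image_of_injOn
  intro A hA B hB h
  have hAX := (mem_powersetCard.1 (hU hA)).1
  have hBX := (mem_powersetCard.1 (hU hB)).1
  have key : ∀ A B : Finset ℕ, A ⊆ X → B ⊆ X → A.image f = B.image f → A ⊆ B := by
    intro A B hA hB h x hx
    have : f x ∈ B.image f := h ▸ mem_image_of_mem f hx
    obtain ⟨y, hy, e⟩ := mem_image.1 this
    rw [← hf (hB hy) (hA hx) e]; exact hy
  exact (key A B hAX hBX h).antisymm (key B A hBX hAX h.symm)

lemma toS (a : ℕ) (X : Finset ℕ) (U V : Finset (Finset ℕ)) (hU : U ⊆ powersetCard a X)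
    (hV : V ⊆ powersetCard a X) (hc : Crs U V) :
    ∃ U' V' : Finset (Finset ℕ), U' ⊆ powersetCard a (Icc 1 X.card) ∧
      V' ⊆ powersetCard a (Icc 1 X.card) ∧
      Shf 1 U' ∧ Shf 1 V' ∧ Crs U' V' ∧ U'.card = U.card ∧ V'.card = V.card := by
  obtain ⟨f, hf, hfm⟩ := exists_map X
  have hs : ∀ U : Finset (Finset ℕ), U ⊆ powersetCard a X →
      U.image (fun A => A.image f) ⊆ powersetCard a (Icc 1 X.card) := by
    intro U hU B hB
    obtain ⟨A, hA, rfl⟩ := mem_image.1 hB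
    have h := mem_powersetCard.1 (hU hA)
    refine mem_powersetCard.2 ⟨?_, ?_⟩
    · intro y hy
      obtain ⟨x, hx, rfl⟩ := mem_image.1 hy
      exact hfm x (h.1 hx)
    · rw [card_image_of_injOn (hf.mono h.1), h.2]
  obtain ⟨U', V', a1, a2, a3, a4, a5, a6, a7⟩ := toShf a X.card _ _ _ rfl (hs U hU) (hs V hV) (by
    intro A' hA' B' hB'
    obtain ⟨A, hA, rfl⟩ := mem_image.1 hA'
    obtain ⟨B, hB, rfl⟩ := mem_image.1 hB'
    obtain ⟨x, hx⟩ := hc A hA B hB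
    have := mem_inter.1 hx
    exact ⟨f x, mem_inter.2 ⟨mem_image_of_mem f this.1, mem_image_of_mem f this.2⟩⟩)
  exact ⟨U', V', a1, a2, a3, a4, a5, a6.trans (img_card a X f hf U hU),
    a7.trans (img_card a X f hf V hV)⟩

lemma C1 (a m : ℕ) (ha : 1 ≤ a) (hm : 2 * a ≤ m) (X : Finset ℕ) (hX : X.card = m)
    (U V : Finset (Finset ℕ)) (hU : U ⊆ powersetCard a X) (hV : V ⊆ powersetCard a X)
    (hc : Crs U V) (hUn : U.Nonempty) (hVn : V.Nonempty) :
    U.card + V.card + (m - a).choose a ≤ m.choose a + 1 ∧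
    (3 ≤ a → 2 * a < m → U.card + V.card + (m - a).choose a = m.choose a + 1 →
      U.card = 1 ∨ V.card = 1) := by
  subst hX
  obtain ⟨U', V', a1, a2, a3, a4, a5, a6, a7⟩ := toS a X U V hU hV hc
  have := C1s a X.card ha hm U' V' a1 a2 a3 a4 a5 (card_pos.1 (a6 ▸ card_pos.2 hUn))
    (card_pos.1 (a7 ▸ card_pos.2 hVn))
  rwa [a6, a7] at this

lemma C2 (a m : ℕ) (ha : 3 ≤ a) (hm : 2 * a ≤ m) (X : Finset ℕ) (hX : X.card = m)
    (U V : Finset (Finset ℕ)) (hU : U ⊆ powersetCard a X) (hV : V ⊆ powersetCard a X)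
    (hc : Crs U V) (hUn : 2 ≤ U.card) (hVn : 2 ≤ V.card) :
    U.card + V.card + 2 * (m - a).choose a ≤ m.choose a + (m - a - 1).choose a + 2 ∧
    (4 ≤ a → 2 * a < m →
      U.card + V.card + 2 * (m - a).choose a = m.choose a + (m - a - 1).choose a + 2 →
      U.card = 2 ∨ V.card = 2) := by
  subst hX
  obtain ⟨U', V', a1, a2, a3, a4, a5, a6, a7⟩ := toS a X U V hU hV hc
  have := C2s a X.card ha hm U' V' a1 a2 a3 a4 a5 (by omega) (by omega)
  rwa [a6, a7] at this

lemma quad (F : Finset (Finset ℕ)) (x y : ℕ) :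
    F.card = (F.filter (fun A => x ∉ A ∧ y ∉ A)).card + (F.filter (fun A => x ∈ A ∧ y ∉ A)).card
      + (F.filter (fun A => x ∉ A ∧ y ∈ A)).card + (F.filter (fun A => x ∈ A ∧ y ∈ A)).card ∧
    miss F x = (F.filter (fun A => x ∉ A ∧ y ∉ A)).card
      + (F.filter (fun A => x ∉ A ∧ y ∈ A)).card ∧
    miss F y = (F.filter (fun A => x ∉ A ∧ y ∉ A)).card
      + (F.filter (fun A => x ∈ A ∧ y ∉ A)).card := by
  have h1 := card_filter_add_card_filter_not (s := F) (fun A => x ∈ A)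
  have h2 := card_filter_add_card_filter_not (s := F.filter (fun A => x ∈ A)) (fun A => y ∈ A)
  have h3 := card_filter_add_card_filter_not (s := F.filter (fun A => x ∉ A)) (fun A => y ∈ A)
  have h4 := card_filter_add_card_filter_not (s := F.filter (fun A => y ∉ A)) (fun A => x ∈ A)
  rw [filter_filter, filter_filter] at h2 h3 h4
  have e1 : F.filter (fun A => y ∉ A ∧ x ∈ A) = F.filter (fun A => x ∈ A ∧ y ∉ A) :=
    filter_congr fun A _ => and_comm
  have e2 : F.filter (fun A => y ∉ A ∧ x ∉ A) = F.filter (fun A => x ∉ A ∧ y ∉ A) :=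
    filter_congr fun A _ => and_comm
  rw [e1, e2] at h4
  refine ⟨by omega, ?_, ?_⟩
  · rw [miss]; omega
  · rw [miss]; omega

lemma union_card_ge {k : ℕ} {P Q : Finset ℕ} (hP : P.card = k) (hQ : Q.card = k) (h : P ≠ Q) :
    k + 1 ≤ (P ∪ Q).card := by
  by_contra hc
  have e : P = P ∪ Q := eq_of_subset_of_card_le subset_union_left (by omega)
  have e' : Q = P ∪ Q := eq_of_subset_of_card_le subset_union_right (by omega)
  exact h (e.trans e'.symm)

lemma M2 (k n c : ℕ) (hk : 4 ≤ k) (hn : 2 * k < n) (F : Finset (Finset ℕ))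
    (hF : F ⊆ powersetCard k (Icc 1 n)) (hc : Crs F F) (hcn : c ∈ Icc 1 n) (h2 : miss F c = 2) :
    F.card + 2 * (n - k - 1).choose (k - 1) ≤
      (n - 1).choose (k - 1) + (n - k - 2).choose (k - 1) + 2 ∧
    (F.card + 2 * (n - k - 1).choose (k - 1) =
      (n - 1).choose (k - 1) + (n - k - 2).choose (k - 1) + 2 →
      ∃ G H, G ⊆ Icc 1 n ∧ H ⊆ Icc 1 n ∧ c ∉ G ∧ c ∉ H ∧ G.card = k ∧ H.card = k ∧
        (G ∪ H).card = k + 1 ∧ F ⊆ {G, H} ∪ St c (Icc 1 n) k G H) := by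
  obtain ⟨G, H, hne, he⟩ := card_eq_two.1 h2
  have hGm : G ∈ F.filter (fun A => c ∉ A) := by rw [he]; simp
  have hHm : H ∈ F.filter (fun A => c ∉ A) := by rw [he]; simp
  obtain ⟨hGF, hGc⟩ := mem_filter.1 hGm
  obtain ⟨hHF, hHc⟩ := mem_filter.1 hHm
  obtain ⟨hGs, hGk⟩ := mem_powersetCard.1 (hF hGF)
  obtain ⟨hHs, hHk⟩ := mem_powersetCard.1 (hF hHF)
  have hsub : F.filter (fun A => c ∈ A) ⊆ St c (Icc 1 n) k G H := by
    intro A hA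
    obtain ⟨h1, h2⟩ := mem_filter.1 hA
    exact mem_filter.2 ⟨hF h1, h2, hc A h1 G hGF, hc A h1 H hHF⟩
  have h1 := card_filter_add_card_filter_not (s := F) (fun A => c ∈ A)
  have h3 : (F.filter (fun A => c ∉ A)).card = 2 := h2
  have h4 := card_le_card hsub
  have hu := union_card_ge hGk hHk hne
  obtain ⟨t, rfl⟩ : ∃ t, k = t + 1 := ⟨k - 1, by omega⟩
  have h5 := St_card c (Icc 1 n) t G H hcn hGc hHc hGs hHs
  rw [hGk, hHk] at h5
  simp only [Nat.card_Icc, Nat.add_sub_cancel] at h5 ⊢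
  rw [show n - (t+1) - 1 = n - 1 - (t+1) by omega]
  have h6 : (n - 1 - (G ∪ H).card).choose t ≤ (n - (t+1) - 2).choose t :=
    Nat.choose_le_choose t (by omega)
  refine ⟨by omega, ?_⟩
  intro heq
  refine ⟨G, H, hGs, hHs, hGc, hHc, hGk, hHk, ?_, ?_⟩
  · by_contra hcon
    have h7 : (n - 1 - (G ∪ H).card).choose t ≤ (n - (t+1) - 3).choose t :=
      Nat.choose_le_choose t (by omega)
    obtain ⟨s, rfl⟩ : ∃ s, t = s + 1 := ⟨t - 1, by omega⟩
    have h8 := Nat.choose_succ_succ (n - (s+1+1) - 3) s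
    rw [show (n - (s+1+1) - 3).succ = n - (s+1+1) - 2 by omega] at h8
    have h9 := Nat.choose_pos (by omega : s ≤ n - (s+1+1) - 3)
    simp only [Nat.succ_eq_add_one] at h8
    omega
  · intro A hA
    by_cases h : c ∈ A
    · exact mem_union_right _ (hsub (mem_filter.2 ⟨hA, h⟩))
    · refine mem_union_left _ ?_
      rw [← he]; exact mem_filter.2 ⟨hA, h⟩

lemma erase_img (a x y : ℕ) (hxy : x ≠ y) (n : ℕ) (F : Finset (Finset ℕ))
    (hF : F ⊆ powersetCard (a+1) (Icc 1 n)) :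
    ((F.filter (fun A => x ∈ A ∧ y ∉ A)).image (fun A => A.erase x)).card
      = (F.filter (fun A => x ∈ A ∧ y ∉ A)).card ∧
    (F.filter (fun A => x ∈ A ∧ y ∉ A)).image (fun A => A.erase x)
      ⊆ powersetCard a (((Icc 1 n).erase x).erase y) := by
  constructor
  · apply card_image_of_injOn
    intro A hA B hB h
    have h1 := (mem_filter.1 hA).2.1
    have h2 := (mem_filter.1 hB).2.1
    simp only at h
    rw [← insert_erase h1, h, insert_erase h2]
  · intro B hB
    obtain ⟨A, hA, rfl⟩ := mem_image.1 hB
    obtain ⟨h1, h2, h3⟩ := mem_filter.1 hA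
    obtain ⟨h4, h5⟩ := mem_powersetCard.1 (hF h1)
    refine mem_powersetCard.2 ⟨?_, ?_⟩
    · intro z hz
      obtain ⟨hz1, hz2⟩ := mem_erase.1 hz
      refine mem_erase.2 ⟨?_, mem_erase.2 ⟨hz1, h4 hz2⟩⟩
      rintro rfl; exact h3 hz2
    · rw [card_erase_of_mem h2, h5]; rfl

lemma erase_img2 (a x y : ℕ) (hxy : x ≠ y) (n : ℕ) (F : Finset (Finset ℕ))
    (hF : F ⊆ powersetCard (a+2) (Icc 1 n)) :
    ((F.filter (fun A => x ∈ A ∧ y ∈ A)).image (fun A => (A.erase x).erase y)).card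
      = (F.filter (fun A => x ∈ A ∧ y ∈ A)).card ∧
    (F.filter (fun A => x ∈ A ∧ y ∈ A)).image (fun A => (A.erase x).erase y)
      ⊆ powersetCard a (((Icc 1 n).erase x).erase y) := by
  constructor
  · apply card_image_of_injOn
    intro A hA B hB h
    have h1 := (mem_filter.1 hA).2
    have h2 := (mem_filter.1 hB).2
    simp only at h
    rw [← insert_erase h1.1, ← insert_erase (mem_erase.2 ⟨hxy.symm, h1.2⟩), h,
      insert_erase (mem_erase.2 ⟨hxy.symm, h2.2⟩), insert_erase h2.1]
  · intro B hB
    obtain ⟨A, hA, rfl⟩ := mem_image.1 hB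
    obtain ⟨h1, h2, h3⟩ := mem_filter.1 hA
    obtain ⟨h4, h5⟩ := mem_powersetCard.1 (hF h1)
    refine mem_powersetCard.2 ⟨?_, ?_⟩
    · intro z hz
      obtain ⟨hz1, hz2⟩ := mem_erase.1 hz
      obtain ⟨hz3, hz4⟩ := mem_erase.1 hz2
      exact mem_erase.2 ⟨hz1, mem_erase.2 ⟨hz3, h4 hz4⟩⟩
    · rw [card_erase_of_mem (mem_erase.2 ⟨hxy.symm, h3⟩), card_erase_of_mem h2, h5]; rfl

lemma LL (k n x y : ℕ) (hk : 4 ≤ k) (hn : 2 * k < n) (F : Finset (Finset ℕ))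
    (hF : F ⊆ powersetCard k (Icc 1 n)) (hc : Crs F F) (hx : x ∈ Icc 1 n) (hy : y ∈ Icc 1 n)
    (hxy : x ≠ y) (hd : ∀ c ∈ Icc 1 n, 2 ≤ miss F c)
    (h0 : (F.filter (fun A => x ∉ A ∧ y ∉ A)).card ≤ 2) :
    F.card + 2 * (n - k - 1).choose (k - 1) ≤
      (n - 1).choose (k - 1) + (n - k - 2).choose (k - 1) + 2 ∧
    (5 ≤ k → F.card + 2 * (n - k - 1).choose (k - 1) =
      (n - 1).choose (k - 1) + (n - k - 2).choose (k - 1) + 2 →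
      ∃ c ∈ Icc 1 n, miss F c ≤ 2) := by
  obtain ⟨q1, q2, q3⟩ := quad F x y
  have dx := hd x hx
  have dy := hd y hy
  -- reduce to `t = k - 2`
  obtain ⟨t, rfl⟩ : ∃ t, k = t + 2 := ⟨k - 2, by omega⟩
  obtain ⟨u1, u2⟩ := erase_img (t+1) x y hxy n F hF
  obtain ⟨v1, v2⟩ := erase_img (t+1) y x hxy.symm n F hF
  obtain ⟨w1, w2⟩ := erase_img2 t x y hxy n F hF
  have hvf : F.filter (fun A => y ∈ A ∧ x ∉ A) = F.filter (fun A => x ∉ A ∧ y ∈ A) :=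
    filter_congr fun A _ => and_comm
  rw [hvf] at v1 v2
  rw [erase_right_comm] at v2
  set X := ((Icc 1 n).erase x).erase y with hX
  have hXc : X.card = n - 2 := by
    rw [hX, card_erase_of_mem (mem_erase.2 ⟨hxy.symm, hy⟩), card_erase_of_mem hx]; simp; omega
  set U := (F.filter (fun A => x ∈ A ∧ y ∉ A)).image (fun A => A.erase x) with hU
  set V := (F.filter (fun A => x ∉ A ∧ y ∈ A)).image (fun A => A.erase y) with hV
  set W := (F.filter (fun A => x ∈ A ∧ y ∈ A)).image (fun A => (A.erase x).erase y) with hW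
  rw [← u1, ← v1, ← w1] at q1
  rw [← v1] at q2
  rw [← u1] at q3
  have hUV : Crs U V := by
    intro A' hA' B' hB'
    obtain ⟨A, hA, rfl⟩ := mem_image.1 hA'
    obtain ⟨B, hB, rfl⟩ := mem_image.1 hB'
    have hA := mem_filter.1 hA
    have hB := mem_filter.1 hB
    obtain ⟨z, hz⟩ := hc A hA.1 B hB.1
    obtain ⟨z1, z2⟩ := mem_inter.1 hz
    refine ⟨z, mem_inter.2 ⟨mem_erase.2 ⟨?_, z1⟩, mem_erase.2 ⟨?_, z2⟩⟩⟩
    · rintro rfl; exact hB.2.1 z2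
    · rintro rfl; exact hA.2.2 z1
  have hWM : ∀ P ∈ F.filter (fun A => x ∉ A ∧ y ∉ A), ∀ Q ∈ F.filter (fun A => x ∉ A ∧ y ∉ A),
      P ⊆ X ∧ P.card = t + 2 ∧ W ⊆ Mt X t P Q := by
    intro P hP Q hQ
    have hP := mem_filter.1 hP
    have hQ := mem_filter.1 hQ
    have hP' := mem_powersetCard.1 (hF hP.1)
    refine ⟨?_, hP'.2, ?_⟩
    · intro z hz
      refine mem_erase.2 ⟨?_, mem_erase.2 ⟨?_, hP'.1 hz⟩⟩
      · rintro rfl; exact hP.2.2 hz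
      · rintro rfl; exact hP.2.1 hz
    · intro A' hA'
      refine mem_filter.2 ⟨w2 hA', ?_⟩
      obtain ⟨A, hA, rfl⟩ := mem_image.1 hA'
      have hA := mem_filter.1 hA
      have aux : ∀ R ∈ F, x ∉ R → y ∉ R → ((A.erase x).erase y ∩ R).Nonempty := by
        intro R hR h1 h2
        obtain ⟨z, hz⟩ := hc A hA.1 R hR
        obtain ⟨z1, z2⟩ := mem_inter.1 hz
        refine ⟨z, mem_inter.2 ⟨mem_erase.2 ⟨?_, mem_erase.2 ⟨?_, z1⟩⟩, z2⟩⟩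
        · rintro rfl; exact h2 z2
        · rintro rfl; exact h1 z2
      exact ⟨aux P hP.1 hP.2.1 hP.2.2, aux Q hQ.1 hQ.2.1 hQ.2.2⟩
  set F0 := F.filter (fun A => x ∉ A ∧ y ∉ A) with hF0
  have p1 : (n - 1).choose (t + 1) = (n - 2).choose t + (n - 2).choose (t + 1) := by
    rw [show n - 1 = (n - 2) + 1 by omega, Nat.choose_succ_succ]
  have p2 : (n - (t + 2) - 1).choose (t + 1) =
      (n - (t + 2) - 2).choose t + (n - (t + 2) - 2).choose (t + 1) := by
    rw [show n - (t + 2) - 1 = (n - (t + 2) - 2) + 1 by omega, Nat.choose_succ_succ]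
  rw [show t + 2 - 1 = t + 1 by omega]
  have hWc : W.card ≤ (n - 2).choose t := by
    have := card_le_card w2
    rwa [card_powersetCard, hXc] at this
  have hcases : F0.card = 0 ∨ F0.card = 1 ∨ F0.card = 2 := by omega
  rcases hcases with h | h | h
  · have c2 := C2 (t+1) (n-2) (by omega) (by omega) X hXc U V u2 v2 hUV (by omega) (by omega)
    rw [show n - 2 - (t + 1) = n - (t + 2) - 1 by omega,
      show n - (t + 2) - 1 - 1 = n - (t + 2) - 2 by omega] at c2
    refine ⟨by omega, ?_⟩
    intro h5 heq
    rcases c2.2 (by omega) (by omega) (by omega) with h' | h'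
    · exact ⟨y, hy, by omega⟩
    · exact ⟨x, hx, by omega⟩
  · have c1 := C1 (t+1) (n-2) (by omega) (by omega) X hXc U V u2 v2 hUV (card_pos.1 (by omega))
      (card_pos.1 (by omega))
    rw [show n - 2 - (t + 1) = n - (t + 2) - 1 by omega] at c1
    obtain ⟨P, hP⟩ := card_pos.1 (by omega : 0 < F0.card)
    obtain ⟨hP1, hP2, hP3⟩ := hWM P hP P hP
    have hM := Mt_card X t P P hP1 hP1
    rw [union_self, hXc, hP2, show n - 2 - (t + 2) = n - (t + 2) - 2 by omega] at hM
    have := card_le_card hP3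
    refine ⟨by omega, ?_⟩
    intro h5 heq
    rcases c1.2 (by omega) (by omega) (by omega) with h' | h'
    · exact ⟨y, hy, by omega⟩
    · exact ⟨x, hx, by omega⟩
  · by_cases hU0 : U.card = 0
    · have := M2 (t+2) n y hk hn F hF hc hy (by omega)
      exact ⟨this.1, fun _ _ => ⟨y, hy, by omega⟩⟩
    by_cases hV0 : V.card = 0
    · have := M2 (t+2) n x hk hn F hF hc hx (by omega)
      exact ⟨this.1, fun _ _ => ⟨x, hx, by omega⟩⟩
    have c1 := C1 (t+1) (n-2) (by omega) (by omega) X hXc U V u2 v2 hUV (card_pos.1 (by omega))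
      (card_pos.1 (by omega))
    rw [show n - 2 - (t + 1) = n - (t + 2) - 1 by omega] at c1
    obtain ⟨P, Q, hne, he⟩ := card_eq_two.1 h
    have hP : P ∈ F0 := by rw [he]; simp
    have hQ : Q ∈ F0 := by rw [he]; simp
    obtain ⟨hP1, hP2, hP3⟩ := hWM P hP Q hQ
    obtain ⟨hQ1, hQ2, -⟩ := hWM Q hQ Q hQ
    have hM := Mt_card X t P Q hP1 hQ1
    have hu := union_card_ge hP2 hQ2 hne
    rw [hXc, hP2, hQ2, show n - 2 - (t + 2) = n - (t + 2) - 2 by omega] at hM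
    have h6 : (n - 2 - (P ∪ Q).card).choose t ≤ (n - (t+2) - 3).choose t :=
      Nat.choose_le_choose t (by omega)
    have := card_le_card hP3
    obtain ⟨s, rfl⟩ : ∃ s, t = s + 1 := ⟨t - 1, by omega⟩
    have p3 : (n - (s + 1 + 2) - 2).choose (s + 1) =
        (n - (s + 1 + 2) - 3).choose s + (n - (s + 1 + 2) - 3).choose (s + 1) := by
      rw [show n - (s + 1 + 2) - 2 = (n - (s + 1 + 2) - 3) + 1 by omega, Nat.choose_succ_succ]
    have p4 : (s + 1).choose s ≤ (n - (s + 1 + 2) - 3).choose s :=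
      Nat.choose_le_choose s (by omega)
    rw [Nat.choose_succ_self_right] at p4
    exact ⟨by omega, fun _ _ => by omega⟩

lemma mainInd (k n : ℕ) (hk : 4 ≤ k) (hn : 2 * k < n) : ∀ (N : ℕ) (F : Finset (Finset ℕ)),
    wt F = N → F ⊆ powersetCard k (Icc 1 n) → Crs F F → (∀ c ∈ Icc 1 n, 2 ≤ miss F c) →
    F.card + 2 * (n - k - 1).choose (k - 1) ≤
      (n - 1).choose (k - 1) + (n - k - 2).choose (k - 1) + 2 ∧
    (5 ≤ k → F.card + 2 * (n - k - 1).choose (k - 1) =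
      (n - 1).choose (k - 1) + (n - k - 2).choose (k - 1) + 2 →
      ∃ c ∈ Icc 1 n, miss F c ≤ 2) := by
  intro N
  induction N using Nat.strong_induction_on with
  | _ N ih =>
  intro F hN hF hc hd
  have h1n : 1 ∈ Icc 1 n := by simp; omega
  by_cases sF : Shf 1 F
  · have := baseS k n hk hn F hF sF hc (hd 1 h1n)
    exact ⟨this.1, fun h5 he => ⟨1, h1n, this.2 h5 he⟩⟩
  obtain ⟨A, hA, i, j, h1, hij, hj, hi, hs⟩ := not_shf sF
  have hjn := (mem_powersetCard.1 (hF hA)).1 hj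
  have hin : i ∈ Icc 1 n := by
    have := mem_Icc.1 hjn
    exact mem_Icc.2 ⟨h1, by omega⟩
  by_cases h0 : (F.filter (fun A => i ∉ A ∧ j ∉ A)).card ≤ 2
  · exact LL k n i j hk hn F hF hc hin hjn hij.ne hd h0
  have hself := miss_sh_self i j F
  have := ih _ (hN ▸ wt_sh_lt i j hij F A hA hj hi hs) (sh i j F) rfl (sh_sub i j k _ hin F hF)
    (sh_crs i j F F hc) (by
      intro c hcn
      by_cases hci : c = i
      · subst hci; omega
      · exact (hd c hcn).trans (miss_sh_ge i j c hci F))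
  rw [sh_card] at this
  refine ⟨this.1, fun h5 he => ?_⟩
  obtain ⟨c, hcn, hm⟩ := this.2 h5 he
  refine ⟨c, hcn, ?_⟩
  by_cases hci : c = i
  · subst hci; omega
  · exact (miss_sh_ge i j c hci F).trans hm

def col (c : ℕ) (G H : Finset ℕ) (x : ℕ) : ℕ :=
  if x = c then 0 else if x ∈ G then (if x ∈ H then 1 else 2) else if x ∈ H then 3 else 4

lemma col_iff (c : ℕ) (G H : Finset ℕ) (hG : c ∉ G) (hH : c ∉ H) (x : ℕ) :
    (x = c ↔ col c G H x = 0) ∧ (x ∈ G ↔ col c G H x = 1 ∨ col c G H x = 2) ∧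
    (x ∈ H ↔ col c G H x = 1 ∨ col c G H x = 3) ∧ col c G H x ≤ 4 := by
  by_cases h1 : x = c
  · subst h1; simp [col, hG, hH]
  · by_cases h2 : x ∈ G <;> by_cases h3 : x ∈ H <;> simp [col, h1, h2, h3]

lemma col_card (n k c : ℕ) (G H : Finset ℕ) (hc : c ∈ Icc 1 n) (hGs : G ⊆ Icc 1 n)
    (hHs : H ⊆ Icc 1 n) (hG : c ∉ G) (hH : c ∉ H) (hGk : G.card = k) (hHk : H.card = k)
    (hu : (G ∪ H).card = k + 1) (v : ℕ) :
    ((Icc 1 n).filter (fun x => col c G H x = v)).card =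
      if v = 0 then 1 else if v = 1 then k - 1 else if v = 2 then 1 else if v = 3 then 1
        else if v = 4 then n - (k + 2) else 0 := by
  have key := col_iff c G H hG hH
  have hi := card_union_add_card_inter G H
  have h1 := card_sdiff_add_card_inter G H
  have h2 := card_sdiff_add_card_inter H G
  rw [inter_comm H G] at h2
  split_ifs with a0 a1 a2 a3 a4
  · have : (Icc 1 n).filter (fun x => col c G H x = v) = {c} := by
      ext x
      rw [mem_filter, mem_singleton, a0, ← (key x).1]
      exact ⟨fun h => h.2, fun h => ⟨h ▸ hc, h⟩⟩
    rw [this, card_singleton]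
  · have : (Icc 1 n).filter (fun x => col c G H x = v) = G ∩ H := by
      ext x
      rw [mem_filter, mem_inter, a1]
      obtain ⟨b1, b2, b3, b4⟩ := key x
      have := @hGs x
      constructor
      · rintro ⟨-, h⟩; exact ⟨b2.2 (Or.inl h), b3.2 (Or.inl h)⟩
      · rintro ⟨h, h'⟩
        refine ⟨this h, ?_⟩
        have := b2.1 h
        have := b3.1 h'
        omega
    rw [this]; omega
  · have : (Icc 1 n).filter (fun x => col c G H x = v) = G \ H := by
      ext x
      rw [mem_filter, mem_sdiff, a2]
      obtain ⟨b1, b2, b3, b4⟩ := key x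
      have := @hGs x
      rw [b3, b2]
      rw [b2] at this
      constructor
      · rintro ⟨-, h⟩; omega
      · intro h
        exact ⟨this h.1, by omega⟩
    rw [this]; omega
  · have : (Icc 1 n).filter (fun x => col c G H x = v) = H \ G := by
      ext x
      rw [mem_filter, mem_sdiff, a3]
      obtain ⟨b1, b2, b3, b4⟩ := key x
      have := @hHs x
      rw [b3, b2]
      rw [b3] at this
      constructor
      · rintro ⟨-, h⟩; omega
      · intro h
        exact ⟨this h.1, by omega⟩
    rw [this]; omega
  · have : (Icc 1 n).filter (fun x => col c G H x = v) = Icc 1 n \ insert c (G ∪ H) := by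
      ext x
      rw [mem_filter, mem_sdiff, mem_insert, mem_union, a4]
      obtain ⟨b1, b2, b3, b4⟩ := key x
      rw [b3, b2, b1]
      constructor
      · rintro ⟨h', h⟩; exact ⟨h', by omega⟩
      · rintro ⟨h', h⟩; exact ⟨h', by omega⟩
    rw [this, card_sdiff_of_subset (insert_subset hc (union_subset hGs hHs)),
      card_insert_of_notMem (by simp [hG, hH]), hu]
    simp
  · rw [card_eq_zero, filter_eq_empty_iff]
    intro x _ h
    have := (key x).2.2.2
    omega

lemma perm_col (X : Finset ℕ) (f g : ℕ → ℕ)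
    (h : ∀ v, (X.filter (fun x => f x = v)).card = (X.filter (fun x => g x = v)).card) :
    ∃ σ : Equiv.Perm ℕ, (∀ x, x ∈ X ↔ σ x ∈ X) ∧ ∀ x ∈ X, g (σ x) = f x := by
  have hcard : ∀ (f : ℕ → ℕ) (v : ℕ), Fintype.card {a : X // f a = v}
      = (X.filter (fun x => f x = v)).card := by
    intro f v
    rw [Fintype.card_subtype]
    rw [← card_image_of_injective _ Subtype.val_injective]
    congr 1
    ext x
    simp [and_comm]
  let e : ∀ v, {a : X // f a = v} ≃ {a : X // g a = v} := fun v =>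
    Fintype.equivOfCardEq (by rw [hcard f v, hcard g v, h v])
  let τ : Equiv.Perm X := Equiv.ofFiberEquiv (f := fun a : X => f a) (g := fun a : X => g a) e
  refine ⟨Equiv.Perm.ofSubtype τ, ?_, ?_⟩
  · intro x
    exact (Equiv.Perm.ofSubtype_apply_mem_iff_mem τ x).symm
  · intro x hx
    rw [Equiv.Perm.ofSubtype_apply_of_mem τ hx]
    exact Equiv.ofFiberEquiv_map e ⟨x, hx⟩

lemma T_card (k n c : ℕ) (hk : 4 ≤ k) (G H : Finset ℕ) (hc : c ∈ Icc 1 n)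
    (hGs : G ⊆ Icc 1 n)
    (hHs : H ⊆ Icc 1 n) (hG : c ∉ G) (hH : c ∉ H) (hGk : G.card = k) (hHk : H.card = k)
    (hu : (G ∪ H).card = k + 1) :
    ({G, H} ∪ St c (Icc 1 n) k G H).card + 2 * (n - k - 1).choose (k - 1) =
      (n - 1).choose (k - 1) + (n - k - 2).choose (k - 1) + 2 := by
  have hne : G ≠ H := by
    rintro rfl; rw [union_self] at hu; omega
  rw [card_union_of_disjoint, card_pair hne]
  · obtain ⟨t, rfl⟩ : ∃ t, k = t + 1 := ⟨k - 1, by omega⟩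
    have h5 := St_card c (Icc 1 n) t G H hc hG hH hGs hHs
    rw [hGk, hHk, hu] at h5
    simp only [Nat.card_Icc, Nat.add_sub_cancel] at h5 ⊢
    rw [show n - (t+1) - 1 = n - 1 - (t+1) by omega,
      show n - (t+1) - 2 = n - 1 - (t+1+1) by omega]
    omega
  · rw [disjoint_left]
    intro A hA hA'
    have := (mem_filter.1 hA').2.1
    simp only [mem_insert, mem_singleton] at hA
    rcases hA with rfl | rfl
    · exact hG this
    · exact hH this

lemma iso_fin (k n c : ℕ) (hk : 4 ≤ k) (hn : 2 * k < n) (F : Finset (Finset ℕ))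
    (hF : F ⊆ powersetCard k (Icc 1 n)) (hc : Crs F F) (hcn : c ∈ Icc 1 n) (h2 : miss F c = 2)
    (heq : F.card + 2 * (n - k - 1).choose (k - 1) =
      (n - 1).choose (k - 1) + (n - k - 2).choose (k - 1) + 2) :
    isoFam n (Jfam n k 2) F := by
  obtain ⟨G, H, hGs, hHs, hG, hH, hGk, hHk, hu, hFs⟩ := (M2 k n c hk hn F hF hc hcn h2).2 heq
  have hT := T_card k n c hk G H hcn hGs hHs hG hH hGk hHk hu
  have b0 : 1 ∈ Icc 1 n := by simp; omega
  have b1 : Icc 2 (k+1) ⊆ Icc 1 n := by intro x; simp only [mem_Icc]; omega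
  have b2 : Icc 3 (k+2) ⊆ Icc 1 n := by intro x; simp only [mem_Icc]; omega
  have b3 : 1 ∉ Icc 2 (k+1) := by simp
  have b4 : 1 ∉ Icc 3 (k+2) := by simp
  have b5 : (Icc 2 (k+1)).card = k := by simp
  have b6 : (Icc 3 (k+2)).card = k := by simp
  have b7 : (Icc 2 (k+1) ∪ Icc 3 (k+2)).card = k + 1 := by
    have : Icc 2 (k+1) ∪ Icc 3 (k+2) = Icc 2 (k+2) := by
      ext x; simp only [mem_union, mem_Icc]; omega
    rw [this]; simp
  have hT' := T_card k n 1 hk _ _ b0 b1 b2 b3 b4 b5 b6 b7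
  have hJ : Jfam n k 2 = {Icc 2 (k+1), Icc 3 (k+2)} ∪ St 1 (Icc 1 n) k (Icc 2 (k+1)) (Icc 3 (k+2)) :=
    rfl
  obtain ⟨σ, hσ, hcol⟩ := perm_col (Icc 1 n) (col 1 (Icc 2 (k+1)) (Icc 3 (k+2))) (col c G H)
    (fun v => by
      rw [col_card n k 1 _ _ b0 b1 b2 b3 b4 b5 b6 b7, col_card n k c G H hcn hGs hHs hG hH hGk hHk hu])
  have m0 : σ 1 = c := by
    rw [((col_iff c G H hG hH _).1), hcol 1 b0, ← (col_iff 1 _ _ b3 b4 1).1]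
  have m1 : ∀ x ∈ Icc 1 n, x ∈ Icc 2 (k+1) → σ x ∈ G := by
    intro x hx h
    rw [((col_iff c G H hG hH _).2.1), hcol x hx, ← (col_iff 1 _ _ b3 b4 x).2.1]; exact h
  have m2 : ∀ x ∈ Icc 1 n, x ∈ Icc 3 (k+2) → σ x ∈ H := by
    intro x hx h
    rw [((col_iff c G H hG hH _).2.2.1), hcol x hx, ← (col_iff 1 _ _ b3 b4 x).2.2.1]; exact h
  have hic : ∀ A : Finset ℕ, (A.image σ).card = A.card :=
    fun A => card_image_of_injective A σ.injective
  have hsub : (Jfam n k 2).image (fun S => S.image σ) ⊆ {G, H} ∪ St c (Icc 1 n) k G H := by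
    intro B hB
    obtain ⟨A, hA, rfl⟩ := mem_image.1 hB
    rw [hJ] at hA
    rcases mem_union.1 hA with h | h
    · refine mem_union_left _ ?_
      simp only [mem_insert, mem_singleton] at h ⊢
      rcases h with rfl | rfl
      · left
        refine eq_of_subset_of_card_le ?_ (by rw [hic, b5, hGk])
        intro y hy
        obtain ⟨x, hx, rfl⟩ := mem_image.1 hy
        exact m1 x (b1 hx) hx
      · right
        refine eq_of_subset_of_card_le ?_ (by rw [hic, b6, hHk])
        intro y hy
        obtain ⟨x, hx, rfl⟩ := mem_image.1 hy
        exact m2 x (b2 hx) hx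
    · refine mem_union_right _ ?_
      obtain ⟨h1, h2, ⟨x, hx⟩, ⟨y, hy⟩⟩ := mem_filter.1 h
      obtain ⟨h3, h4⟩ := mem_powersetCard.1 h1
      have hx := mem_inter.1 hx
      have hy := mem_inter.1 hy
      refine mem_filter.2 ⟨mem_powersetCard.2 ⟨?_, by rw [hic, h4]⟩, ?_, ?_, ?_⟩
      · intro y hy
        obtain ⟨x, hx, rfl⟩ := mem_image.1 hy
        exact (hσ x).1 (h3 hx)
      · exact m0 ▸ mem_image_of_mem σ h2
      · exact ⟨σ x, mem_inter.2 ⟨mem_image_of_mem σ hx.1, m1 x (h3 hx.1) hx.2⟩⟩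
      · exact ⟨σ y, mem_inter.2 ⟨mem_image_of_mem σ hy.1, m2 y (h3 hy.1) hy.2⟩⟩
  have hJc : ((Jfam n k 2).image (fun S => S.image σ)).card = (Jfam n k 2).card :=
    card_image_of_injective _ (image_injective σ.injective)
  rw [← hJ] at hT'
  refine ⟨σ, hσ, ?_⟩
  rw [eq_of_subset_of_card_le hsub (by omega), eq_of_subset_of_card_le hFs (by omega)]

theorem han_kohayakawa (n k : ℕ) (hk : 4 ≤ k) (hnk : 2 * k < n)
    (F : Finset (Finset ℕ)) (hF : F ⊆ (Finset.Icc 1 n).powersetCard k)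
    (hint : ∀ A ∈ F, ∀ B ∈ F, (A ∩ B).Nonempty)
    (hdiv : 2 ≤ diversity n F) :
    (F.card : ℤ) ≤ ((n - 1).choose (k - 1) : ℤ) - ((n - k - 1).choose (k - 1) : ℤ)
      - ((n - k - 2).choose (k - 2) : ℤ) + 2 ∧
    (5 ≤ k → (F.card : ℤ) = ((n - 1).choose (k - 1) : ℤ) - ((n - k - 1).choose (k - 1) : ℤ)
      - ((n - k - 2).choose (k - 2) : ℤ) + 2 → isoFam n (Jfam n k 2) F) := by
  have hcrs : Crs F F := hint
  have hd : ∀ c ∈ Icc 1 n, 2 ≤ miss F c := by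
    intro c hc
    have h1 : deg F c ≤ maxDeg n F := le_sup (f := deg F) hc
    have h2 := card_filter_add_card_filter_not (s := F) (fun A => c ∈ A)
    simp only [diversity] at hdiv
    simp only [deg] at h1
    simp only [miss]
    omega
  have key := mainInd k n hk hnk _ F rfl hF hcrs hd
  have p : (n - k - 1).choose (k - 1) = (n - k - 2).choose (k - 2) + (n - k - 2).choose (k - 1) := by
    obtain ⟨t, rfl⟩ : ∃ t, k = t + 2 := ⟨k - 2, by omega⟩
    rw [show n - (t + 2) - 1 = (n - (t + 2) - 2) + 1 by omega, show t + 2 - 1 = t + 1 by omega,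
      Nat.choose_succ_succ]
    rfl
  refine ⟨by omega, ?_⟩
  intro h5 heq
  have heq' : F.card + 2 * (n - k - 1).choose (k - 1) =
      (n - 1).choose (k - 1) + (n - k - 2).choose (k - 1) + 2 := by omega
  obtain ⟨c, hc, hm⟩ := key.2 h5 heq'
  have := hd c hc
  exact iso_fin k n c hk hnk F hF hcrs hc (by omega) heq'
end

section
/- Let n > 2k ≥ 6 and let F ⊆ C([n],k) be an intersecting family with γ(F) ≤ C(n-4,k-3). Then Δ(F) + ((n-k-2)/(k-2))·γ(F) ≤ C(n-1,k-1). If additionally F is non-trivial (no common element in all sets), then Δ(F) + ((n-k-2)/(k-2))·γ(F) ≤ C(n-1,k-1) - C(n-k-1,k-1) + (n-k-2)/(k-2). -/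
open Finset

/-- A family on `s+t-2` points that contains `range s` has a large `t`-shadow. -/
theorem wdb_shadow_range (s t : ℕ) (ht : 2 ≤ t) (hts : t ≤ s) (C : Finset (Finset ℕ))
    (hC : ∀ S ∈ C, S.card = s ∧ S ⊆ range (s + t - 2)) (hr : range s ∈ C) :
    (C.card - 1) * (s - 1) + s.choose t * (t - 1)
      ≤ (C.biUnion (powersetCard t)).card * (t - 1) := by
  classical
  set D := C.biUnion (powersetCard t) with hD
  set D2 := D.filter (fun T => ¬ T ⊆ range s) with hD2
  have h1 : s.choose t + D2.card ≤ D.card := by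
    have hd : Disjoint (powersetCard t (range s)) D2 := by
      rw [disjoint_left]
      intro T hT hT2
      exact (mem_filter.1 hT2).2 (mem_powersetCard.1 hT).1
    have hsub : powersetCard t (range s) ∪ D2 ⊆ D := by
      apply union_subset _ (filter_subset _ _)
      intro T hT
      exact mem_biUnion.2 ⟨_, hr, hT⟩
    have := card_le_card hsub
    rwa [card_union_of_disjoint hd, card_powersetCard, card_range] at this
  have hmaxmem : ∀ T : Finset ℕ, T.Nonempty → T.sup id ∈ T := by
    intro T hT
    obtain ⟨i, hi, h⟩ := exists_mem_eq_sup T hT id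
    rw [h]; exact hi
  have hle : ∀ T : Finset ℕ, ∀ i ∈ T, i ≤ T.sup id := fun T i hi => le_sup (f := id) hi
  have h2 : (C.erase (range s)).card * (s - 1).choose (t - 1)
      ≤ D2.card * (s - 2).choose (t - 2) := by
    apply card_mul_le_card_mul (fun S T : Finset ℕ => T ⊆ S ∧ T.sup id = S.sup id)
    · intro S hS
      obtain ⟨hne, hSC⟩ := mem_erase.1 hS
      obtain ⟨hc, hsub⟩ := hC S hSC
      have hSne : S.Nonempty := by rw [← card_pos]; omega
      set m := S.sup id with hm
      have hmS : m ∈ S := hmaxmem S hSne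
      have hms : s ≤ m := by
        by_contra hlt
        apply hne
        apply eq_of_subset_of_card_le
        · intro i hi
          have := hle S i hi
          rw [mem_range]; omega
        · simp [hc]
      have hcard : (powersetCard (t - 1) (S.erase m)).card = (s - 1).choose (t - 1) := by
        rw [card_powersetCard, card_erase_of_mem hmS, hc]
      rw [← hcard]
      apply card_le_card_of_injOn (fun T => insert m T)
      · intro T hT
        obtain ⟨hT1, hT2⟩ := mem_powersetCard.1 (mem_coe.1 hT)
        have hmT : m ∉ T := fun h => by simpa using hT1 h
        have hTS : insert m T ⊆ S :=
          insert_subset hmS (hT1.trans (erase_subset _ _))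
        rw [mem_coe, mem_bipartiteAbove]
        refine ⟨mem_filter.2 ⟨mem_biUnion.2 ⟨S, hSC, mem_powersetCard.2 ⟨hTS, ?_⟩⟩, ?_⟩, hTS, ?_⟩
        · rw [card_insert_of_notMem hmT]; omega
        · intro h
          have := mem_range.1 (h (mem_insert_self m T))
          omega
        · apply le_antisymm
          · exact sup_mono hTS
          · exact hle _ m (mem_insert_self m T)
      · intro T hT T' hT' h
        have a1 : m ∉ T := fun h => by simpa using (mem_powersetCard.1 (mem_coe.1 hT)).1 h
        have a2 : m ∉ T' := fun h => by simpa using (mem_powersetCard.1 (mem_coe.1 hT')).1 h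
        have h' : insert m T = insert m T' := h
        rw [← erase_insert a1, ← erase_insert a2, h']
    · intro T hT
      obtain ⟨hTD, hTr⟩ := mem_filter.1 hT
      obtain ⟨S0, hS0, hTS0⟩ := mem_biUnion.1 hTD
      obtain ⟨hTS0, hTc⟩ := mem_powersetCard.1 hTS0
      have hTne : T.Nonempty := by rw [← card_pos]; omega
      set b := T.sup id with hb
      have hbT : b ∈ T := hmaxmem T hTne
      have hbM : b < s + t - 2 := mem_range.1 ((hC S0 hS0).2 (hTS0 hbT))
      have hcard : (powersetCard (s - t) (range b \ T)).card ≤ (s - 2).choose (t - 2) := by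
        have e1 : range b \ T = range b \ (T.erase b) := by
          ext i
          simp only [mem_sdiff, mem_range, mem_erase]
          constructor
          · rintro ⟨h1, h2⟩; exact ⟨h1, fun h => h2 h.2⟩
          · rintro ⟨h1, h2⟩; exact ⟨h1, fun h => h2 ⟨by omega, h⟩⟩
        have e2 : T.erase b ⊆ range b := by
          intro i hi
          have h3 := hle T i (mem_of_mem_erase hi)
          have h4 := ne_of_mem_erase hi
          rw [mem_range]; omega
        rw [card_powersetCard, e1, card_sdiff_of_subset e2, card_erase_of_mem hbT, card_range, hTc]
        have e3 : (s - 2).choose (t - 2) = (s - 2).choose (s - t) := by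
          rw [← Nat.choose_symm (show t - 2 ≤ s - 2 by omega)]
          congr 1; omega
        rw [e3]
        exact Nat.choose_le_choose _ (by omega)
      refine le_trans ?_ hcard
      apply card_le_card_of_injOn (fun S => S \ T)
      · intro S hS
        obtain ⟨hS, hTS, hmax⟩ := mem_bipartiteBelow _ |>.1 (mem_coe.1 hS)
        have hSC := (hC S (mem_of_mem_erase hS)).1
        rw [mem_coe, mem_powersetCard]
        refine ⟨?_, ?_⟩
        · intro i hi
          obtain ⟨hi1, hi2⟩ := mem_sdiff.1 hi
          refine mem_sdiff.2 ⟨?_, hi2⟩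
          have h3 := hle S i hi1
          have h4 : i ≠ b := fun h => hi2 (h ▸ hbT)
          rw [mem_range]; omega
        · rw [card_sdiff_of_subset hTS, hSC, hTc]
      · intro S hS S' hS' h
        have a1 := (mem_bipartiteBelow _ |>.1 (mem_coe.1 hS)).2.1
        have a2 := (mem_bipartiteBelow _ |>.1 (mem_coe.1 hS')).2.1
        have h' : S \ T = S' \ T := h
        rw [← sdiff_union_of_subset a1, ← sdiff_union_of_subset a2, h']
  rw [card_erase_of_mem hr] at h2
  have h3 : (s - 1) * (s - 2).choose (t - 2) = (s - 1).choose (t - 1) * (t - 1) := by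
    obtain ⟨a, rfl⟩ : ∃ a, s = a + 2 := ⟨s - 2, by omega⟩
    obtain ⟨c, rfl⟩ : ∃ c, t = c + 2 := ⟨t - 2, by omega⟩
    exact Nat.add_one_mul_choose_eq a c
  have hpos : 0 < (s - 2).choose (t - 2) := Nat.choose_pos (by omega)
  have h4 : (C.card - 1) * (s - 1) ≤ D2.card * (t - 1) := by
    apply Nat.le_of_mul_le_mul_right _ hpos
    calc (C.card - 1) * (s - 1) * (s - 2).choose (t - 2)
        = (C.card - 1) * (s - 1).choose (t - 1) * (t - 1) := by
          rw [mul_assoc, h3, mul_assoc]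
      _ ≤ D2.card * (s - 2).choose (t - 2) * (t - 1) := Nat.mul_le_mul_right _ h2
      _ = _ := by ring
  calc _ ≤ D2.card * (t - 1) + s.choose t * (t - 1) := Nat.add_le_add_right h4 _
    _ = (s.choose t + D2.card) * (t - 1) := by ring
    _ ≤ _ := Nat.mul_le_mul_right _ h1

/-- Colex-initial segments of every possible size exist. -/
theorem wdb_exists_initSeg (N r c : ℕ) (hc : c ≤ N.choose r) :
    ∃ 𝒞 : Finset (Finset (Fin N)), Finset.Colex.IsInitSeg 𝒞 r ∧ 𝒞.card = c := by
  classical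
  induction c with
  | zero => exact ⟨∅, by simp, rfl⟩
  | succ c ih =>
    obtain ⟨𝒞, h𝒞, hcard⟩ := ih (by omega)
    set R := powersetCard r (univ : Finset (Fin N)) \ 𝒞 with hR
    have hRne : R.Nonempty := by
      rw [sdiff_nonempty]
      intro h
      have := card_le_card h
      rw [card_powersetCard, card_univ, Fintype.card_fin] at this
      omega
    obtain ⟨A, hA, hmin⟩ := exists_min_image R toColex hRne
    obtain ⟨hA1, hA2⟩ := mem_sdiff.1 hA
    refine ⟨insert A 𝒞, ⟨?_, ?_⟩, by rw [card_insert_of_notMem hA2, hcard]⟩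
    · intro S hS
      rcases mem_insert.1 (mem_coe.1 hS) with rfl | h
      · exact (mem_powersetCard.1 hA1).2
      · exact h𝒞.1 h
    · rintro S T hS ⟨hTS, hTc⟩
      rcases mem_insert.1 hS with rfl | h
      · by_contra hT
        have hTR : T ∈ R := mem_sdiff.2 ⟨mem_powersetCard.2 ⟨subset_univ _, hTc⟩,
          fun h => hT (mem_insert_of_mem h)⟩
        exact absurd hTS (not_lt.2 (hmin T hTR))
      · exact mem_insert_of_mem (h𝒞.2 h ⟨hTS, hTc⟩)

/-- All `r`-subsets of the first `m` points form an initial segment. -/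
theorem wdb_isInitSeg_range (N r m : ℕ) :
    Finset.Colex.IsInitSeg
      (powersetCard r ((univ : Finset (Fin N)).filter (fun i => i.val < m))) r := by
  refine ⟨Set.sized_powersetCard _ _, ?_⟩
  simp_rw [mem_powersetCard]
  rintro A B hA ⟨HB₁, HB₂⟩
  refine ⟨fun t ht ↦ ?_, ‹_›⟩
  rw [mem_filter]
  refine ⟨mem_univ _, ?_⟩
  have : toColex (image Fin.val B) < toColex (image Fin.val A) := by
    rwa [Finset.Colex.toColex_image_lt_toColex_image Fin.val_strictMono]
  apply Colex.forall_lt_mono this.le _ t (mem_image.2 ⟨t, ht, rfl⟩)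
  simp_rw [mem_image]
  rintro _ ⟨a, ha, hab⟩
  simpa [hab] using hA.1 ha

/-- Transfer of shadows from `Fin N` to `ℕ`. -/
theorem wdb_shadow_transfer (N s t : ℕ) (hts : t ≤ s) (𝒜 : Finset (Finset (Fin N)))
    (h𝒜 : (𝒜 : Set (Finset (Fin N))).Sized s) :
    (Finset.shadow^[s - t] 𝒜).card
      = ((𝒜.image (fun S => S.map Fin.valEmbedding)).biUnion (powersetCard t)).card := by
  classical
  have e : (𝒜.image (fun S => S.map Fin.valEmbedding)).biUnion (powersetCard t)
      = (Finset.shadow^[s - t] 𝒜).image (fun S => S.map Fin.valEmbedding) := by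
    ext T
    simp only [mem_biUnion, mem_image, mem_powersetCard,
      mem_shadow_iterate_iff_exists_mem_card_add]
    constructor
    · rintro ⟨_, ⟨S, hS, rfl⟩, hT, hTc⟩
      obtain ⟨U, hU, rfl⟩ := subset_map_iff.1 hT
      rw [card_map] at hTc
      exact ⟨U, ⟨S, hS, hU, by rw [h𝒜 hS, hTc]; omega⟩, rfl⟩
    · rintro ⟨U, ⟨S, hS, hU, hc⟩, rfl⟩
      refine ⟨_, ⟨S, hS, rfl⟩, map_subset_map.2 hU, ?_⟩
      rw [h𝒜 hS] at hc
      rw [card_map]; omega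
  rw [e, card_image_of_injective _ (map_injective _)]

/-- Kruskal–Katona consequence. -/
theorem wdb_kk (N s t : ℕ) (ht : 2 ≤ t) (hts : t ≤ s) (hN : s + t - 2 ≤ N)
    (G : Finset (Finset ℕ)) (hG : ∀ S ∈ G, S.card = s ∧ S ⊆ range N)
    (h1 : 1 ≤ G.card) (hc : G.card ≤ (s + t - 2).choose s) :
    (G.card - 1) * (s - 1) + s.choose t * (t - 1)
      ≤ (G.biUnion (powersetCard t)).card * (t - 1) := by
  classical
  have hinj : Function.Injective (fun S : Finset (Fin N) => S.map Fin.valEmbedding) :=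
    map_injective _
  obtain ⟨𝒜, rfl⟩ : ∃ 𝒜 : Finset (Finset (Fin N)),
      𝒜.image (fun S => S.map Fin.valEmbedding) = G := by
    refine ⟨univ.filter (fun S => S.map Fin.valEmbedding ∈ G), ?_⟩
    ext T
    simp only [mem_image, mem_filter, mem_univ, true_and]
    constructor
    · rintro ⟨S, hS, rfl⟩; exact hS
    · intro hT
      have : (univ.filter (fun i : Fin N => i.val ∈ T)).map Fin.valEmbedding = T := by
        ext i
        simp only [mem_map, mem_filter, mem_univ, true_and, Fin.valEmbedding_apply]
        constructor
        · rintro ⟨a, ha, rfl⟩; exact ha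
        · intro hi
          exact ⟨⟨i, mem_range.1 ((hG T hT).2 hi)⟩, hi, rfl⟩
      exact ⟨_, by rw [this]; exact hT, this⟩
  have hsz : (𝒜 : Set (Finset (Fin N))).Sized s := by
    intro S hS
    have := (hG _ (mem_image_of_mem _ (mem_coe.1 hS))).1
    rwa [card_map] at this
  rw [← wdb_shadow_transfer N s t hts 𝒜 hsz]
  rw [card_image_of_injective _ hinj] at h1 hc ⊢
  obtain ⟨𝒞, h𝒞, hcard⟩ := wdb_exists_initSeg N s 𝒜.card
    (hc.trans (Nat.choose_le_choose _ hN))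
  have hcf : ∀ m ≤ N, ((univ : Finset (Fin N)).filter (fun i => i.val < m)).card = m := by
    intro m hm
    rw [Fin.card_filter_val_lt]
    omega
  have hsub : 𝒞 ⊆ powersetCard s ((univ : Finset (Fin N)).filter (fun i => i.val < s + t - 2)) := by
    rcases h𝒞.total (wdb_isInitSeg_range N s (s + t - 2)) with h | h
    · exact h
    · refine (eq_of_subset_of_card_le h ?_).ge
      rw [card_powersetCard, hcf _ hN]; omega
  have hmem : (univ : Finset (Fin N)).filter (fun i => i.val < s) ∈ 𝒞 := by
    have hself : (univ : Finset (Fin N)).filter (fun i => i.val < s) ∈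
        powersetCard s ((univ : Finset (Fin N)).filter (fun i => i.val < s)) :=
      mem_powersetCard.2 ⟨Subset.refl _, hcf _ (by omega)⟩
    rcases h𝒞.total (wdb_isInitSeg_range N s s) with h | h
    · have : 𝒞 = powersetCard s ((univ : Finset (Fin N)).filter (fun i => i.val < s)) := by
        apply eq_of_subset_of_card_le h
        rw [card_powersetCard, hcf _ (by omega), Nat.choose_self]; omega
      rw [this]; exact hself
    · exact h hself
  have hkk := iterated_kk (k := s - t) hsz hcard.le h𝒞
  have key := wdb_shadow_range s t ht hts (𝒞.image (fun S => S.map Fin.valEmbedding)) (by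
      intro S hS
      obtain ⟨U, hU, rfl⟩ := mem_image.1 hS
      refine ⟨by rw [card_map]; exact h𝒞.1 hU, ?_⟩
      intro i hi
      obtain ⟨a, ha, rfl⟩ := mem_map.1 hi
      have := (mem_powersetCard.1 (hsub hU)).1 ha
      exact mem_range.2 (mem_filter.1 this).2) (by
      refine mem_image.2 ⟨_, hmem, ?_⟩
      ext i
      simp only [mem_map, mem_filter, mem_univ, true_and, Fin.valEmbedding_apply, mem_range]
      constructor
      · rintro ⟨a, ha, rfl⟩; exact ha
      · intro hi
        exact ⟨⟨i, by omega⟩, hi, rfl⟩)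
  rw [← wdb_shadow_transfer N s t hts 𝒞 h𝒞.1, card_image_of_injective _ hinj, hcard] at key
  exact key.trans (Nat.mul_le_mul_right _ hkk)

/-- The combinatorial core: a lower bound on the number of missing sets. -/
theorem wdb_core (n k : ℕ) (hk : 3 ≤ k) (hnk : 2 * k < n)
    (F : Finset (Finset ℕ)) (hF : F ⊆ (Finset.Icc 1 n).powersetCard k)
    (hint : ∀ A ∈ F, ∀ B ∈ F, (A ∩ B).Nonempty) (x : ℕ) (hx : x ∈ Finset.Icc 1 n)
    (h1 : 1 ≤ (F.filter (fun S => x ∉ S)).card)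
    (hc : (F.filter (fun S => x ∉ S)).card ≤ (n - 4).choose (k - 3)) :
    (F.filter (fun S => x ∈ S)).card * (k - 2) + ((F.filter (fun S => x ∉ S)).card - 1) * (n - k - 2)
      + (n - k - 1).choose (k - 1) * (k - 2) ≤ (n - 1).choose (k - 1) * (k - 2) := by
  classical
  set X := (Finset.Icc 1 n).erase x with hX
  have hXc : X.card = n - 1 := by rw [hX, card_erase_of_mem hx, Nat.card_Icc]; omega
  set B := F.filter (fun S => x ∉ S) with hB
  set G := B.image (fun S => X \ S) with hG
  have hBX : ∀ S ∈ B, S ⊆ X ∧ S.card = k := by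
    intro S hS
    obtain ⟨hS1, hS2⟩ := mem_filter.1 hS
    obtain ⟨hS3, hS4⟩ := mem_powersetCard.1 (hF hS1)
    exact ⟨subset_erase.2 ⟨hS3, hS2⟩, hS4⟩
  have hGc : G.card = B.card := by
    apply card_image_of_injOn
    intro S hS S' hS' h
    have h' : X \ S = X \ S' := h
    rw [← Finset.sdiff_sdiff_eq_self (hBX S hS).1, ← Finset.sdiff_sdiff_eq_self (hBX S' hS').1, h']
  have key := wdb_kk (n + 1) (n - k - 1) (k - 1) (by omega) (by omega) (by omega) G (by
      intro S hS
      obtain ⟨U, hU, rfl⟩ := mem_image.1 hS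
      refine ⟨?_, ?_⟩
      · rw [card_sdiff_of_subset (hBX U hU).1, hXc, (hBX U hU).2]; omega
      · intro i hi
        have := mem_Icc.1 (mem_of_mem_erase (mem_sdiff.1 hi).1)
        rw [mem_range]; omega) (by omega) (by
      rw [hGc]
      have e1 : n - k - 1 + (k - 1) - 2 = n - 4 := by omega
      have e2 : n - k - 1 = n - 4 - (k - 3) := by omega
      rw [e1, e2, Nat.choose_symm (by omega)]
      exact hc)
  set D := G.biUnion (powersetCard (k - 1)) with hD
  set A := (F.filter (fun S => x ∈ S)).image (fun S => S.erase x) with hA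
  have hAc : A.card = (F.filter (fun S => x ∈ S)).card := by
    apply card_image_of_injOn
    intro S hS S' hS' h
    have h' : S.erase x = S'.erase x := h
    rw [← insert_erase (mem_filter.1 (mem_coe.1 hS)).2,
      ← insert_erase (mem_filter.1 (mem_coe.1 hS')).2, h']
  have hdis : Disjoint A D := by
    rw [disjoint_left]
    intro T hTA hTD
    obtain ⟨S, hS, rfl⟩ := mem_image.1 hTA
    obtain ⟨V, hV, hTV⟩ := mem_biUnion.1 hTD
    obtain ⟨U, hU, rfl⟩ := mem_image.1 hV
    obtain ⟨i, hi⟩ := hint S (mem_filter.1 hS).1 U (mem_filter.1 hU).1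
    obtain ⟨hi1, hi2⟩ := mem_inter.1 hi
    have hix : i ≠ x := fun h => (mem_filter.1 hU).2 (h ▸ hi2)
    exact (mem_sdiff.1 ((mem_powersetCard.1 hTV).1 (mem_erase.2 ⟨hix, hi1⟩))).2 hi2
  have hsub : A ∪ D ⊆ powersetCard (k - 1) X := by
    apply union_subset
    · intro T hT
      obtain ⟨S, hS, rfl⟩ := mem_image.1 hT
      obtain ⟨hS1, hS2⟩ := mem_filter.1 hS
      obtain ⟨hS3, hS4⟩ := mem_powersetCard.1 (hF hS1)
      exact mem_powersetCard.2 ⟨erase_subset_erase _ hS3, by rw [card_erase_of_mem hS2, hS4]⟩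
    · intro T hT
      obtain ⟨V, hV, hTV⟩ := mem_biUnion.1 hT
      obtain ⟨U, hU, rfl⟩ := mem_image.1 hV
      obtain ⟨h3, h4⟩ := mem_powersetCard.1 hTV
      exact mem_powersetCard.2 ⟨h3.trans sdiff_subset, h4⟩
  have hle := card_le_card hsub
  rw [card_union_of_disjoint hdis, card_powersetCard, hXc, hAc] at hle
  rw [hGc] at key
  have e1 : k - 1 - 1 = k - 2 := by omega
  have e2 : n - k - 1 - 1 = n - k - 2 := by omega
  rw [e1, e2] at key
  calc _ = (F.filter (fun S => x ∈ S)).card * (k - 2) + ((B.card - 1) * (n - k - 2)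
      + (n - k - 1).choose (k - 1) * (k - 2)) := by ring
    _ ≤ (F.filter (fun S => x ∈ S)).card * (k - 2) + D.card * (k - 2) := Nat.add_le_add_left key _
    _ = ((F.filter (fun S => x ∈ S)).card + D.card) * (k - 2) := by ring
    _ ≤ _ := Nat.mul_le_mul_right _ hle

/-- Weighted diversity bound: for `n > 2k ≥ 6` and intersecting `F ⊆ C([n],k)` with
`γ(F) ≤ C(n-4,k-3)`, we have `Δ(F) + ((n-k-2)/(k-2))·γ(F) ≤ C(n-1,k-1)`; if moreover `F`
is non-trivial, then
`Δ(F) + ((n-k-2)/(k-2))·γ(F) ≤ C(n-1,k-1) - C(n-k-1,k-1) + (n-k-2)/(k-2)`. -/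
theorem weighted_diversity_bound (n k : ℕ) (hk : 3 ≤ k) (hnk : 2 * k < n)
    (F : Finset (Finset ℕ)) (hF : F ⊆ (Finset.Icc 1 n).powersetCard k)
    (hint : ∀ A ∈ F, ∀ B ∈ F, (A ∩ B).Nonempty)
    (hdiv : diversity n F ≤ (n - 4).choose (k - 3)) :
    (maxDeg n F : ℚ) + (((n : ℚ) - k - 2) / ((k : ℚ) - 2)) * (diversity n F : ℚ)
        ≤ ((n - 1).choose (k - 1) : ℚ) ∧
    ((∀ x : ℕ, ∃ S ∈ F, x ∉ S) →
      (maxDeg n F : ℚ) + (((n : ℚ) - k - 2) / ((k : ℚ) - 2)) * (diversity n F : ℚ)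
        ≤ ((n - 1).choose (k - 1) : ℚ) - ((n - k - 1).choose (k - 1) : ℚ)
          + ((n : ℚ) - k - 2) / ((k : ℚ) - 2)) := by
  classical
  obtain ⟨x, hx, hxs⟩ := exists_mem_eq_sup (Finset.Icc 1 n)
    ⟨1, by rw [mem_Icc]; omega⟩ (deg F)
  have hmax : maxDeg n F = (F.filter (fun S => x ∈ S)).card := hxs
  have hsum : (F.filter (fun S => x ∈ S)).card + (F.filter (fun S => x ∉ S)).card = F.card :=
    card_filter_add_card_filter_not _
  have hdv : diversity n F = (F.filter (fun S => x ∉ S)).card := by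
    unfold diversity; rw [hmax]; omega
  rw [hdv] at hdiv
  rw [hmax, hdv]
  have hcore := wdb_core n k hk hnk F hF hint x hx
  have hAle : (F.filter (fun S => x ∈ S)).card ≤ (n - 1).choose (k - 1) := by
    have h1 : (F.filter (fun S => x ∈ S)).card
        ≤ (powersetCard (k - 1) ((Finset.Icc 1 n).erase x)).card := by
      apply card_le_card_of_injOn (fun S => S.erase x)
      · intro S hS
        obtain ⟨hS1, hS2⟩ := mem_filter.1 (mem_coe.1 hS)
        obtain ⟨hS3, hS4⟩ := mem_powersetCard.1 (hF hS1)
        exact mem_powersetCard.2 ⟨erase_subset_erase _ hS3, by rw [card_erase_of_mem hS2, hS4]⟩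
      · intro S hS S' hS' h
        have h' : S.erase x = S'.erase x := h
        rw [← insert_erase (mem_filter.1 (mem_coe.1 hS)).2,
          ← insert_erase (mem_filter.1 (mem_coe.1 hS')).2, h']
    rwa [card_powersetCard, card_erase_of_mem hx, Nat.card_Icc, Nat.add_sub_cancel] at h1
  have hbase : n - k - 2 ≤ (n - k - 1).choose (k - 1) * (k - 2) := by
    obtain ⟨c, rfl⟩ : ∃ c, k = c + 3 := ⟨k - 3, by omega⟩
    obtain ⟨a, rfl⟩ : ∃ a, n = a + (c + 3) + 3 := ⟨n - (c + 3) - 3, by omega⟩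
    have e1 : a + (c + 3) + 3 - (c + 3) - 2 = a + 1 := by omega
    have e2 : a + (c + 3) + 3 - (c + 3) - 1 = a + 1 + 1 := by omega
    have e3 : c + 3 - 1 = c + 1 + 1 := by omega
    have e4 : c + 3 - 2 = c + 1 := by omega
    rw [e1, e2, e3, e4]
    have h3 := Nat.add_one_mul_choose_eq a c
    have h4 : (a + 1).choose (c + 1) ≤ (a + 1 + 1).choose (c + 1 + 1) := by
      rw [Nat.choose_succ_succ (a + 1) (c + 1)]; omega
    have h5 : 0 < a.choose c := Nat.choose_pos (by omega)
    nlinarith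
  generalize (F.filter (fun S => x ∈ S)).card = a at *
  generalize hbdef : (F.filter (fun S => x ∉ S)).card = b at *
  generalize (n - 1).choose (k - 1) = N at *
  generalize (n - k - 1).choose (k - 1) = M at *
  have hk2 : (0 : ℚ) < (k : ℚ) - 2 := by
    have : (3 : ℚ) ≤ k := by exact_mod_cast hk
    linarith
  have c1 : ((n - k - 2 : ℕ) : ℚ) = (n : ℚ) - k - 2 := by
    rw [Nat.cast_sub (by omega), Nat.cast_sub (by omega)]; norm_num
  have c2 : ((k - 2 : ℕ) : ℚ) = (k : ℚ) - 2 := by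
    rw [Nat.cast_sub (by omega)]; norm_num
  have hbaseQ : (n : ℚ) - k - 2 ≤ M * ((k : ℚ) - 2) := by
    rw [← c1, ← c2]; exact_mod_cast hbase
  have hcQ : 1 ≤ b → (a : ℚ) + (((n : ℚ) - k - 2) / ((k : ℚ) - 2)) * (b : ℚ)
        ≤ (N : ℚ) - (M : ℚ) + ((n : ℚ) - k - 2) / ((k : ℚ) - 2) := by
    intro hb
    have h := hcore hb hdiv
    have h' : (a : ℚ) * ((k : ℚ) - 2) + ((b : ℚ) - 1) * ((n : ℚ) - k - 2) + M * ((k : ℚ) - 2)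
        ≤ N * ((k : ℚ) - 2) := by
      have h6 : ((b - 1 : ℕ) : ℚ) = (b : ℚ) - 1 := by rw [Nat.cast_sub hb]; norm_num
      rw [← c1, ← c2, ← h6]; exact_mod_cast h
    have h7 : ((b : ℚ) - 1) * (((n : ℚ) - k - 2) / ((k : ℚ) - 2)) ≤ N - M - a := by
      rw [← mul_div_assoc, div_le_iff₀ hk2]; linarith
    linarith
  constructor
  · rcases Nat.eq_zero_or_pos b with hb | hb
    · have : (a : ℚ) ≤ N := by exact_mod_cast hAle
      rw [hb]; simpa using this
    · have h := hcQ hb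
      have h8 : ((n : ℚ) - k - 2) / ((k : ℚ) - 2) ≤ M := by rwa [div_le_iff₀ hk2]
      linarith
  · intro hnt
    apply hcQ
    obtain ⟨S, hS, hxS⟩ := hnt x
    rw [← hbdef]
    exact card_pos.2 ⟨S, mem_filter.2 ⟨hS, hxS⟩⟩
end
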